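/- arXiv:2103.13521 — 6 statements merged into one kernel-verified Lean document; each statement's English description precedes it below -/
import Mathlib

section
/- Let P be a probability distribution over variables (X_v)_{v∈V} that is Markovian to a maximal directed ancestral graph G_0. Suppose that (a) P is converse pairwise Markovian to G_0, and (b) whenever there exists C ⊆ V∖{i,j} with i⫫j|C, then also i⫫j|an(i,j) (with an(i,j) computed in G_0). Then sk(G_0) = sk(G(P)) for every output G(P) of a natural constraint-based structure-learning algorithm. -/
set_option linter.unusedSectionVars false
set_option linter.unusedVariables false

open MeasureTheory ProbabilityTheory

/-! ## Mixed graphs, m-separation, and related graphical notions -/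

/-- A mixed graph with arrows (`i → j`) and bidirected arcs (`i ↔ j`). -/
structure MixedGraph (V : Type) where
  arrow : V → V → Prop
  arc : V → V → Prop

namespace MixedGraph

variable {V : Type} (G : MixedGraph V)

/-- `G.anc i j` : `i` is an ancestor of `j`, i.e. there is a directed path from `i` to `j`. -/
def anc (i j : V) : Prop := Relation.TransGen G.arrow i j

/-- Adjacency: there is some edge between `i` and `j`. -/
def adj (i j : V) : Prop := G.arrow i j ∨ G.arrow j i ∨ G.arc i j

/-- A directed ancestral graph: a simple mixed graph with arrows and arcs, no directed
cycle, and no arc one of whose endpoints is an ancestor of the other. -/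
def IsDirectedAncestral : Prop :=
  (∀ i j, G.arc i j ↔ G.arc j i) ∧
  (∀ i, ¬ G.arc i i) ∧
  (∀ i j, ¬ (G.arrow i j ∧ G.arrow j i)) ∧
  (∀ i j, ¬ (G.arrow i j ∧ G.arc i j)) ∧
  (∀ i, ¬ G.anc i i) ∧
  (∀ i j, G.arc i j → ¬ G.anc i j ∧ ¬ G.anc j i)

/-- A DAG: only arrows, and no directed cycle. -/
def IsDAG : Prop := (∀ i j, ¬ G.arc i j) ∧ (∀ i, ¬ G.anc i i)

/-- There is an edge between `i` and `j` with an arrowhead at `j`. -/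
def headInto (i j : V) : Prop := G.arrow i j ∨ G.arc i j

/-- The inner node `b` of a tripath `⟨a,b,c⟩` is a collider. -/
def collider (a b c : V) : Prop := G.headInto a b ∧ G.headInto c b

/-- The list of nodes `p` is a path which is connecting given `C` : consecutive nodes are
adjacent, no node is repeated, every collider inner node is in `C` or an ancestor of a node
in `C`, and every non-collider inner node is not in `C`. -/
def Connecting (C : Set V) (p : List V) : Prop :=
  p.Nodup ∧ p.Chain' G.adj ∧
  ∀ t, 0 < t → ∀ (h1 : t - 1 < p.length) (h2 : t < p.length) (h3 : t + 1 < p.length),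
    (G.collider (p.get ⟨t-1, h1⟩) (p.get ⟨t, h2⟩) (p.get ⟨t+1, h3⟩) →
      p.get ⟨t, h2⟩ ∈ C ∨ ∃ c ∈ C, G.anc (p.get ⟨t, h2⟩) c) ∧
    (¬ G.collider (p.get ⟨t-1, h1⟩) (p.get ⟨t, h2⟩) (p.get ⟨t+1, h3⟩) →
      p.get ⟨t, h2⟩ ∉ C)

/-- m-separation : `A ⊥ B | C` in `G` iff there is no connecting path between `A` and `B`
given `C`. -/
def mSep (A B C : Set V) : Prop :=
  ¬ ∃ p : List V, G.Connecting C p ∧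
      (∃ a ∈ A, p.head? = some a) ∧ (∃ b ∈ B, p.getLast? = some b)

/-- Two graphs are Markov equivalent if they induce the same independence model by
m-separation. -/
def MarkovEquiv (H : MixedGraph V) : Prop :=
  ∀ A B C : Set V, Disjoint A B → Disjoint A C → Disjoint B C →
    (G.mSep A B C ↔ H.mSep A B C)

/-- `G` is maximal: every pair of non-adjacent nodes is separated given some set. -/
def Maximal : Prop :=
  ∀ i j : V, i ≠ j → ¬ G.adj i j → ∃ C : Set V, i ∉ C ∧ j ∉ C ∧ G.mSep {i} {j} C

/-- `an(i,j) = (an(i) ∪ an(j)) \ {i,j}`. -/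
def anSet (i j : V) : Set V :=
  {k | (G.anc k i ∨ G.anc k j) ∧ k ≠ i ∧ k ≠ j}

/-- The strict form of the minimal order of `G` : `a < b` iff `b` is an ancestor of `a`. -/
def minLt (a b : V) : Prop := G.anc b a

end MixedGraph

/-! ## Abstract (singleton) independence relations and stability conditions -/

section IndependenceRelations

variable {V : Type}

/-- Ordered upward-stability of a singleton independence relation `ci` w.r.t. the strict
partial order `lt`. -/
def UpStab (lt : V → V → Prop) (ci : V → V → Set V → Prop) : Prop :=
  ∀ i j (C : Set V), i ≠ j → i ∉ C → j ∉ C → ci i j C →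
    ∀ k, k ≠ i → k ≠ j → (lt i k ∨ lt j k) → ci i j (C ∪ {k})

/-- Ordered downward-stability of a singleton independence relation `ci` w.r.t. the strict
partial order `lt`. -/
def DownStab (lt : V → V → Prop) (ci : V → V → Set V → Prop) : Prop :=
  ∀ i j (C : Set V), i ≠ j → i ∉ C → j ∉ C → ci i j C →
    ∀ k, ¬ lt i k → ¬ lt j k → (∀ l ∈ C \ {k}, ¬ lt l k) → ci i j (C \ {k})

/-- The skeleton of an independence relation: `i` and `j` are adjacent iff there is no `C`
with `⟨i,j|C⟩` an independence. -/
def skP (ci : V → V → Set V → Prop) (i j : V) : Prop :=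
  i ≠ j ∧ ¬ ∃ C : Set V, i ∉ C ∧ j ∉ C ∧ ci i j C

/-- An output of a natural constraint-based structure-learning algorithm: a graph `H` whose
skeleton is the skeleton of the independence relation `ci`, obtained by directing the edges
of that skeleton according to a `P`-compatible partial order (given here by its strict form
`lt`, required to coincide with the minimal order of `H`), w.r.t. which ordered upward- and
downward-stability hold. -/
def NaturalOutput (ci : V → V → Set V → Prop) (H : MixedGraph V) : Prop :=
  (∀ i j, H.adj i j ↔ skP ci i j) ∧
  ∃ lt : V → V → Prop, Irreflexive lt ∧ Transitive lt ∧
    (∀ i j, H.arrow i j ↔ (skP ci i j ∧ lt j i)) ∧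
    (∀ i j, H.arc i j ↔ (skP ci i j ∧ ¬ lt i j ∧ ¬ lt j i)) ∧
    (∀ a b, lt a b ↔ H.minLt a b) ∧
    UpStab lt ci ∧ DownStab lt ci

/-- Singleton-transitivity. -/
def SingletonTransitive (ci : V → V → Set V → Prop) : Prop :=
  ∀ i j k (C : Set V), i ≠ j → i ≠ k → j ≠ k → i ∉ C → j ∉ C → k ∉ C →
    ci i j C → ci i j (C ∪ {k}) → ci i k C ∨ ci j k C

/-- `ci` is V-unstable : there is a V-configuration `⟨i,k,j⟩` in the skeleton of `ci` and a
set `C` disjoint from `{i,j,k}` with `⟨i,j|C⟩` and `⟨i,j|C∪{k}⟩` independencies. -/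
def VUnstable (ci : V → V → Set V → Prop) : Prop :=
  ∃ i k j : V, ∃ C : Set V, i ≠ j ∧ i ≠ k ∧ j ≠ k ∧
    skP ci i k ∧ skP ci k j ∧ ¬ skP ci i j ∧
    i ∉ C ∧ j ∉ C ∧ k ∉ C ∧ ci i j C ∧ ci i j (C ∪ {k})

def VStable (ci : V → V → Set V → Prop) : Prop := ¬ VUnstable ci

/-- `ci` is path-unstable : there is a path `⟨i, i₁, …, i_r, k, j⟩` in the skeleton of `ci`
with `i,j` non-adjacent and every `i_n` adjacent to `j`, and a set `C` disjoint from
`{i,j,k}`, such that `⟨i,j | U∪C⟩` and `⟨i,j | U∪C∪{k}⟩` are independencies, where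
`U = {i₁,…,i_r}`. -/
def PathUnstable (ci : V → V → Set V → Prop) : Prop :=
  ∃ (i k j : V) (is : List V) (C : Set V),
    (i :: (is ++ [k, j])).Nodup ∧
    (i :: (is ++ [k, j])).Chain' (skP ci) ∧
    ¬ skP ci i j ∧
    (∀ m ∈ is, skP ci m j) ∧
    i ∉ C ∧ j ∉ C ∧ k ∉ C ∧
    ci i j ({m | m ∈ is} ∪ C) ∧ ci i j (({m | m ∈ is} ∪ C) ∪ {k})

def PathStable (ci : V → V → Set V → Prop) : Prop := ¬ PathUnstable ci

/-- The uniqueness property: all maximal directed ancestral graphs with the skeleton of `ci`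
w.r.t. (the minimal order of) which `ci` satisfies ordered upward- and downward-stability
are Markov equivalent. -/
def UniquenessProp (ci : V → V → Set V → Prop) : Prop :=
  ∀ H1 H2 : MixedGraph V,
    H1.IsDirectedAncestral → H1.Maximal → (∀ i j, H1.adj i j ↔ skP ci i j) →
      UpStab H1.minLt ci → DownStab H1.minLt ci →
    H2.IsDirectedAncestral → H2.Maximal → (∀ i j, H2.adj i j ↔ skP ci i j) →
      UpStab H2.minLt ci → DownStab H2.minLt ci →
    H1.MarkovEquiv H2

/-- The DAG-uniqueness property: all DAGs with the skeleton of `ci` w.r.t. which `ci`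
satisfies ordered upward- and downward-stability are Markov equivalent. -/
def DAGUniquenessProp (ci : V → V → Set V → Prop) : Prop :=
  ∀ H1 H2 : MixedGraph V,
    H1.IsDAG → (∀ i j, H1.adj i j ↔ skP ci i j) →
      UpStab H1.minLt ci → DownStab H1.minLt ci →
    H2.IsDAG → (∀ i j, H2.adj i j ↔ skP ci i j) →
      UpStab H2.minLt ci → DownStab H2.minLt ci →
    H1.MarkovEquiv H2

end IndependenceRelations

/-! ## Probabilistic conditional independence of collections of variables -/

section Probabilistic

variable {V : Type} {Ω : Type} [MeasurableSpace Ω]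
  {𝓧 : V → Type}

/-- The tuple of variables `X_A`. -/
def restrictVars (X : ∀ v, Ω → 𝓧 v) (A : Set V) : Ω → ∀ a : A, 𝓧 a :=
  fun ω a => X a ω

variable [StandardBorelSpace Ω] [Nonempty Ω] [∀ v, MeasurableSpace (𝓧 v)]

theorem measurable_restrictVars {X : ∀ v, Ω → 𝓧 v} (hX : ∀ v, Measurable (X v))
    (A : Set V) : Measurable (restrictVars X A) :=
  measurable_pi_lambda _ fun a => hX a

/-- `⟨A,B|C⟩ ∈ J(P)` : the tuple `X_A` is conditionally independent of `X_B` given `X_C`. -/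
def CI (μ : Measure Ω) [IsFiniteMeasure μ] (X : ∀ v, Ω → 𝓧 v)
    (hX : ∀ v, Measurable (X v)) (A B C : Set V) : Prop :=
  CondIndepFun (MeasurableSpace.comap (restrictVars X C) MeasurableSpace.pi)
    (Measurable.comap_le (measurable_restrictVars hX C))
    (restrictVars X A) (restrictVars X B) μ

/-- Singleton conditional independence `i ⫫ j | C`. -/
def ciP (μ : Measure Ω) [IsFiniteMeasure μ] (X : ∀ v, Ω → 𝓧 v)
    (hX : ∀ v, Measurable (X v)) (i j : V) (C : Set V) : Prop :=
  CI μ X hX {i} {j} C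

/-- `P` is Markovian to `G` : `J(G) ⊆ J(P)`. -/
def Markovian (μ : Measure Ω) [IsFiniteMeasure μ] (X : ∀ v, Ω → 𝓧 v)
    (hX : ∀ v, Measurable (X v)) (G : MixedGraph V) : Prop :=
  ∀ A B C : Set V, Disjoint A B → Disjoint A C → Disjoint B C →
    G.mSep A B C → CI μ X hX A B C

/-- `P` and `G` are faithful : `J(G) = J(P)`. -/
def Faithful (μ : Measure Ω) [IsFiniteMeasure μ] (X : ∀ v, Ω → 𝓧 v)
    (hX : ∀ v, Measurable (X v)) (G : MixedGraph V) : Prop :=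
  ∀ A B C : Set V, Disjoint A B → Disjoint A C → Disjoint B C →
    (G.mSep A B C ↔ CI μ X hX A B C)

/-- `P` is converse pairwise Markovian to `G`. -/
def ConvPairwiseMarkov (μ : Measure Ω) [IsFiniteMeasure μ] (X : ∀ v, Ω → 𝓧 v)
    (hX : ∀ v, Measurable (X v)) (G : MixedGraph V) : Prop :=
  ∀ i j : V, i ≠ j → ciP μ X hX i j (G.anSet i j) → ¬ G.adj i j

end Probabilistic

/-- Lemma 3 of Sadeghi–Soo. -/
theorem statement_0 {V : Type} [Fintype V]
    {Ω : Type} [MeasurableSpace Ω] [StandardBorelSpace Ω] [Nonempty Ω]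
    (μ : Measure Ω) [IsProbabilityMeasure μ]
    {𝓧 : V → Type} [∀ v, MeasurableSpace (𝓧 v)]
    (X : ∀ v, Ω → 𝓧 v) (hX : ∀ v, Measurable (X v))
    (G0 : MixedGraph V) (hanc : G0.IsDirectedAncestral) (hmax : G0.Maximal)
    (hMark : Markovian μ X hX G0)
    (hconv : ConvPairwiseMarkov μ X hX G0)
    (hb : ∀ (i j : V) (C : Set V), i ≠ j → i ∉ C → j ∉ C →
      ciP μ X hX i j C → ciP μ X hX i j (G0.anSet i j)) :
    ∀ H : MixedGraph V, NaturalOutput (ciP μ X hX) H →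
      ∀ i j, G0.adj i j ↔ H.adj i j := by
  intro H hH i j
  rw [hH.1 i j]
  obtain ⟨h1, h2, h3, h4, h5, h6⟩ := hanc
  constructor
  · intro hadj
    have hne : i ≠ j := by
      rintro rfl
      rcases hadj with h | h | h
      · exact h3 _ _ ⟨h, h⟩
      · exact h3 _ _ ⟨h, h⟩
      · exact h2 _ h
    refine ⟨hne, ?_⟩
    rintro ⟨C, hi, hj, hc⟩
    exact hconv i j hne (hb i j C hne hi hj hc) hadj
  · rintro ⟨hne, hno⟩
    by_contra hadj
    obtain ⟨C, hi, hj, hs⟩ := hmax i j hne hadj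
    exact hno ⟨C, hi, hj, hMark {i} {j} C (by simpa using hne) (by simpa using hi)
      (by simpa using hj) hs⟩
end

section
/- Suppose that a probability distribution P over variables (X_v)_{v∈V} is faithful to a maximal directed ancestral graph G_0. Then every output G(P) of a natural constraint-based structure-learning algorithm satisfies sk(G_0) = sk(G(P)). -/
set_option linter.unusedSectionVars false
set_option linter.unusedVariables false

open MeasureTheory ProbabilityTheory

/-- Proposition 4 of Sadeghi–Soo. -/
theorem statement_1 {V : Type} [Fintype V]
    {Ω : Type} [MeasurableSpace Ω] [StandardBorelSpace Ω] [Nonempty Ω]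
    (μ : Measure Ω) [IsProbabilityMeasure μ]
    {𝓧 : V → Type} [∀ v, MeasurableSpace (𝓧 v)]
    (X : ∀ v, Ω → 𝓧 v) (hX : ∀ v, Measurable (X v))
    (G0 : MixedGraph V) (hanc : G0.IsDirectedAncestral) (hmax : G0.Maximal)
    (hfaith : Faithful μ X hX G0) :
    ∀ H : MixedGraph V, NaturalOutput (ciP μ X hX) H →
      ∀ i j, G0.adj i j ↔ H.adj i j := by
  intro H hH i j
  have key : ∀ C : Set V, i ≠ j → i ∉ C → j ∉ C →
      (G0.mSep {i} {j} C ↔ ciP μ X hX i j C) := by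
    intro C hij hi hj
    exact hfaith {i} {j} C (by simpa using hij) (by simpa using hi) (by simpa using hj)
  rw [hH.1 i j]
  constructor
  · intro hadj
    have hij : i ≠ j := by
      rintro rfl
      rcases hadj with h | h | h
      · exact hanc.2.2.2.2.1 i (Relation.TransGen.single h)
      · exact hanc.2.2.2.2.1 i (Relation.TransGen.single h)
      · exact hanc.2.1 i h
    refine ⟨hij, ?_⟩
    rintro ⟨C, hi, hj, hc⟩
    refine (key C hij hi hj).2 hc ⟨[i, j], ⟨by simpa using hij, ?_, ?_⟩,
      ⟨i, rfl, rfl⟩, ⟨j, rfl, rfl⟩⟩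
    · exact List.isChain_pair.2 hadj
    · intro t ht h1 h2 h3
      simp at h3
      omega
  · rintro ⟨hij, hno⟩
    by_contra hadj
    obtain ⟨C, hi, hj, hs⟩ := hmax i j hij hadj
    exact hno ⟨C, hi, hj, (key C hij hi hj).1 hs⟩
end

section
/- Suppose that a probability distribution P over variables (X_v)_{v∈V} is faithful to a directed ancestral graph G_0. If a directed ancestral graph G is Markov equivalent to G_0, then P satisfies ordered upward- and downward-stability w.r.t. G (i.e., w.r.t. the minimal order of G). -/
set_option linter.unusedSectionVars false
set_option linter.unusedVariables false

open MeasureTheory ProbabilityTheory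

namespace MixedGraph

variable {V : Type} (G : MixedGraph V)

/-- Recursive form of connecting, with the set of allowed colliders `D` decoupled. -/
def Conn (C D : Set V) : List V → Prop
  | [] => True
  | [_] => True
  | [a, b] => G.adj a b
  | a :: b :: c :: l => G.adj a b ∧ (G.collider a b c → b ∈ D) ∧ (¬ G.collider a b c → b ∉ C) ∧
      Conn C D (b :: c :: l)

theorem conn_iff (C D : Set V) (p : List V) : G.Conn C D p ↔
    (p.IsChain G.adj ∧
  ∀ t, 0 < t → ∀ (h1 : t - 1 < p.length) (h2 : t < p.length) (h3 : t + 1 < p.length),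
    (G.collider (p.get ⟨t-1, h1⟩) (p.get ⟨t, h2⟩) (p.get ⟨t+1, h3⟩) →
      p.get ⟨t, h2⟩ ∈ D) ∧
    (¬ G.collider (p.get ⟨t-1, h1⟩) (p.get ⟨t, h2⟩) (p.get ⟨t+1, h3⟩) →
      p.get ⟨t, h2⟩ ∉ C)) := by
  induction p using Conn.induct with
  | case1 => simp [Conn]
  | case2 => simp [Conn]
  | case3 a b =>
    simp only [Conn, List.isChain_cons_cons, List.isChain_singleton, and_true, List.length_cons,
      List.length_nil]
    constructor
    · intro h
      refine ⟨h, ?_⟩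
      intro t ht h1 h2 h3
      omega
    · exact fun h => h.1
  | case4 a b c l ih =>
    rw [Conn, ih, List.isChain_cons_cons (a := a)]
    constructor
    · rintro ⟨h1, h2, h3, h4, h5⟩
      refine ⟨⟨h1, h4⟩, ?_⟩
      intro t ht
      obtain ⟨t, rfl⟩ : ∃ s, t = s + 1 := ⟨t - 1, by omega⟩
      rcases t with _ | t
      · intro _ _ _
        exact ⟨h2, h3⟩
      · intro g1 g2 g3
        exact h5 (t + 1) (by omega) (by simp at g1 ⊢; omega) (by simp at g2 ⊢; omega)
          (by simp at g3 ⊢; omega)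
    · rintro ⟨⟨h1, h4⟩, h5⟩
      have h6 := h5 1 (by omega) (by simp) (by simp) (by simp)
      refine ⟨h1, h6.1, h6.2, h4, ?_⟩
      intro t ht
      obtain ⟨t, rfl⟩ : ∃ s, t = s + 1 := ⟨t - 1, by omega⟩
      intro g1 g2 g3
      exact h5 (t + 2) (by omega) (by simp at g1 ⊢; omega) (by simp at g2 ⊢; omega)
          (by simp at g3 ⊢; omega)

/-- Nodes in `C` or ancestors of nodes in `C`. -/
def An (C : Set V) : Set V := {b | b ∈ C ∨ ∃ c ∈ C, G.anc b c}

theorem connecting_iff (C : Set V) (p : List V) :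
    G.Connecting C p ↔ p.Nodup ∧ G.Conn C (G.An C) p := by
  rw [conn_iff]; rfl

theorem Conn.tail {C D : Set V} {a : V} {l : List V} (h : G.Conn C D (a :: l)) :
    G.Conn C D l := by
  match l, h with
  | [], _ => trivial
  | [_], _ => trivial
  | _ :: _ :: _, h => exact h.2.2.2

theorem Conn.suffix {C D : Set V} {p q : List V} (h : G.Conn C D p) (hs : q <:+ p) :
    G.Conn C D q := by
  obtain ⟨r, rfl⟩ := hs
  induction r with
  | nil => exact h
  | cons a r ih => exact ih (Conn.tail G h)

theorem getLast_suffix {p q : List V} (hs : q <:+ p) (hq : q ≠ []) :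
    q.getLast? = p.getLast? := by
  obtain ⟨r, rfl⟩ := hs
  rw [List.getLast?_append_of_ne_nil _ hq]

theorem lemS {C D A : Set V} (p : List V) (h : G.Conn C (D ∪ A) p) :
    G.Conn C D p ∨ ∃ m l, (m :: l) <:+ p ∧ G.Conn C D (m :: l) ∧ m ∉ D ∧ m ∈ A := by
  induction p using Conn.induct with
  | case1 => left; trivial
  | case2 => left; trivial
  | case3 a b => left; exact h
  | case4 a b c l ih =>
    obtain ⟨h1, h2, h3, h4⟩ := h
    rcases ih h4 with h5 | ⟨m, l', h5, h6⟩
    · by_cases hc : G.collider a b c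
      · rcases h2 hc with h | h
        · left; exact ⟨h1, fun _ => h, h3, h5⟩
        · by_cases hD : b ∈ D
          · left; exact ⟨h1, fun _ => hD, h3, h5⟩
          · right; exact ⟨b, c :: l, List.suffix_cons _ _, h5, hD, h⟩
      · left; exact ⟨h1, fun h => absurd h hc, h3, h5⟩
    · right; exact ⟨m, l', h5.trans (List.suffix_cons _ _), h6⟩

theorem lemT (hG : G.IsDirectedAncestral) {C D : Set V} {m i : V}
    (hmi : Relation.ReflTransGen G.arrow m i) :
    ∀ l : List V, G.Conn C D (m :: l) → (m :: l).Nodup →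
      (∀ c ∈ C, ¬ Relation.ReflTransGen G.arrow m c) →
      ∃ l', G.Conn C D (i :: l') ∧ (i :: l').Nodup ∧
        (i :: l').getLast? = (m :: l).getLast? := by
  obtain ⟨hsym, -, hno2, hnoarc, -, -⟩ := hG
  induction hmi using Relation.ReflTransGen.head_induction_on with
  | refl => intro l h1 h2 _; exact ⟨l, h1, h2, rfl⟩
  | head hab hbi ih =>
    rename_i a b
    intro l h1 h2 h3
    have h3' : ∀ c ∈ C, ¬ Relation.ReflTransGen G.arrow b c :=
      fun c hc h => h3 c hc (Relation.ReflTransGen.head hab h)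
    by_cases hb : b ∈ a :: l
    · obtain ⟨s, t, hst⟩ := List.append_of_mem hb
      have hsuf : (b :: t) <:+ (a :: l) := ⟨s, hst.symm⟩
      obtain ⟨l', g1, g2, g3⟩ := ih t (Conn.suffix G h1 hsuf) (h2.sublist hsuf.sublist) h3'
      exact ⟨l', g1, g2, g3.trans (getLast_suffix hsuf (by simp))⟩
    · have haC : a ∉ C := fun h => h3 a h Relation.ReflTransGen.refl
      have hcn : G.Conn C D (b :: a :: l) := by
        cases l with
        | nil => exact Or.inr (Or.inl hab)
        | cons c l =>
          refine ⟨Or.inr (Or.inl hab), ?_, fun _ => haC, h1⟩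
          rintro ⟨h | h, -⟩
          · exact absurd ⟨hab, h⟩ (hno2 _ _)
          · exact absurd ⟨hab, (hsym _ _).1 h⟩ (hnoarc _ _)
      obtain ⟨l', g1, g2, g3⟩ := ih (a :: l) hcn (List.nodup_cons.2 ⟨hb, h2⟩) h3'
      exact ⟨l', g1, g2, g3.trans (by simp)⟩

theorem up_sep (hG : G.IsDirectedAncestral) {i j k : V} {C : Set V}
    (h : G.mSep {i} {j} C) (hk : G.anc k i) : G.mSep {i} {j} (C ∪ {k}) := by
  rintro ⟨p, hp, ⟨a, rfl, hpi⟩, ⟨b, rfl, hpj⟩⟩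
  apply h
  rw [connecting_iff] at hp
  obtain ⟨hnd, hc⟩ := hp
  have hc' : G.Conn C (G.An C ∪ {b | G.anc b a}) p := by
    rw [conn_iff] at hc ⊢
    refine ⟨hc.1, fun t ht h1 h2 h3 => ⟨fun g => ?_, fun g g' => ?_⟩⟩
    · rcases (hc.2 t ht h1 h2 h3).1 g with (h | h) | ⟨c, h | h, h'⟩
      · exact Or.inl (Or.inl h)
      · right
        rw [Set.mem_singleton_iff] at h
        rw [h]; exact hk
      · exact Or.inl (Or.inr ⟨c, h, h'⟩)
      · right
        rw [Set.mem_singleton_iff] at h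
        subst h
        exact Relation.TransGen.trans h' hk
    · exact (hc.2 t ht h1 h2 h3).2 g (Or.inl g')
  rcases G.lemS p hc' with h1 | ⟨m, l, hs, h1, hm, hma⟩
  · exact ⟨p, (connecting_iff _ _ _).2 ⟨hnd, h1⟩, ⟨a, rfl, hpi⟩, ⟨b, rfl, hpj⟩⟩
  · obtain ⟨l', g1, g2, g3⟩ := G.lemT hG (Relation.TransGen.to_reflTransGen hma) l h1
      (hnd.sublist hs.sublist) (by
        intro c hc hmc
        apply hm
        rcases Relation.reflTransGen_iff_eq_or_transGen.1 hmc with h | h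
        · subst h; exact Or.inl hc
        · exact Or.inr ⟨c, hc, h⟩)
    refine ⟨a :: l', (connecting_iff _ _ _).2 ⟨g2, g1⟩, ⟨a, rfl, rfl⟩, ⟨b, rfl, ?_⟩⟩
    rw [g3, getLast_suffix hs (by simp), hpj]

theorem down_sep (hG : G.IsDirectedAncestral) {i j k : V} {C : Set V}
    (h : G.mSep {i} {j} C) (hki : ¬ G.anc k i) (hkj : ¬ G.anc k j)
    (hkC : ∀ l ∈ C \ {k}, ¬ G.anc k l) : G.mSep {i} {j} (C \ {k}) := by
  obtain ⟨hsym, -, hno2, hnoarc, -, -⟩ := hG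
  rintro ⟨p, ⟨hnd, hch, hp⟩, ⟨a, rfl, hpi⟩, ⟨b, rfl, hpj⟩⟩
  apply h
  refine ⟨p, ⟨hnd, hch, ?_⟩, ⟨a, rfl, hpi⟩, ⟨b, rfl, hpj⟩⟩
  have hadj : ∀ s (h : s + 1 < p.length), G.adj p[s] p[s+1] :=
    fun s h => List.isChain_iff_getElem.1 hch s h
  have hcolC : ∀ x, G.anc k x → ¬ (x ∈ C \ {k} ∨ ∃ c ∈ C \ {k}, G.anc x c) := by
    rintro x hx (h | ⟨c, hc, h⟩)
    · exact hkC x h hx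
    · exact hkC c hc (Relation.TransGen.trans hx h)
  have hfwd : ∀ n s (h : s + 1 < p.length), p.length - s = n →
      G.headInto p[s] p[s+1] → G.anc k p[s+1] → False := by
    intro n
    induction n with
    | zero => intro s h hn; omega
    | succ n ih =>
      intro s h hn hh ha
      by_cases hl : s + 2 < p.length
      · have hq := hp (s+1) (by omega) (by omega) h hl
        simp only [List.get_eq_getElem, Nat.add_sub_cancel] at hq
        by_cases hc : G.collider p[s] p[s+1] p[s+2]
        · exact hcolC _ ha (hq.1 hc)
        · have harr : G.arrow p[s+1] p[s+2] := by
            rcases hadj (s+1) hl with h | h | h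
            · exact h
            · exact absurd ⟨hh, Or.inl h⟩ hc
            · exact absurd ⟨hh, Or.inr ((hsym _ _).1 h)⟩ hc
          exact ih (s+1) hl (by omega) (Or.inl harr) (Relation.TransGen.tail ha harr)
      · have : p[s+1] = b := by
          rw [List.getLast?_eq_getElem?] at hpj
          have e : p.length - 1 = s + 1 := by omega
          rw [e, List.getElem?_eq_getElem h] at hpj
          exact Option.some.inj hpj
        exact hkj (this ▸ ha)
  have hbwd : ∀ s (h : s + 1 < p.length),
      G.headInto p[s+1] p[s] → G.anc k p[s] → False := by
    intro s
    induction s with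
    | zero =>
      intro h hh ha
      have : p[0] = a := by
        rw [List.head?_eq_getElem?, List.getElem?_eq_getElem (by omega)] at hpi
        exact Option.some.inj hpi
      exact hki (this ▸ ha)
    | succ s ih =>
      intro h hh ha
      have hq := hp (s+1) (by omega) (by omega) (by omega) h
      simp only [List.get_eq_getElem, Nat.add_sub_cancel] at hq
      by_cases hc : G.collider p[s] p[s+1] p[s+2]
      · exact hcolC _ ha (hq.1 hc)
      · have harr : G.arrow p[s+1] p[s] := by
          rcases hadj s (by omega) with h | h | h
          · exact absurd ⟨Or.inl h, hh⟩ hc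
          · exact h
          · exact absurd ⟨Or.inr h, hh⟩ hc
        exact ih (by omega) (Or.inl harr) (Relation.TransGen.tail ha harr)
  intro t ht h1 h2 h3
  obtain ⟨t, rfl⟩ : ∃ s, t = s + 1 := ⟨t - 1, by omega⟩
  have hq := hp (t+1) ht h1 h2 h3
  simp only [List.get_eq_getElem, Nat.add_sub_cancel] at hq ⊢
  refine ⟨fun hc => ?_, fun hc hC => ?_⟩
  · rcases hq.1 hc with h | ⟨c, h, h'⟩
    · exact Or.inl h.1
    · exact Or.inr ⟨c, h.1, h'⟩
  · have hk : p[t+1] = k := by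
      by_contra hne
      exact hq.2 hc ⟨hC, hne⟩
    rcases hadj t h2 with h | h | h
    rotate_left
    · exact hbwd t h2 (Or.inl h) (hk ▸ Relation.TransGen.single h)
    all_goals
      have harr : G.arrow p[t+1] p[t+2] := by
        rcases hadj (t+1) h3 with g | g | g
        · exact g
        · exact absurd ⟨by simp [headInto, h], Or.inl g⟩ hc
        · exact absurd ⟨by simp [headInto, h], Or.inr ((hsym _ _).1 g)⟩ hc
      exact hfwd _ (t+1) h3 rfl (Or.inl harr) (hk ▸ Relation.TransGen.single harr)

end MixedGraph

/-- Proposition 6 of Sadeghi–Soo. -/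
theorem statement_3 {V : Type} [Fintype V]
    {Ω : Type} [MeasurableSpace Ω] [StandardBorelSpace Ω] [Nonempty Ω]
    (μ : Measure Ω) [IsProbabilityMeasure μ]
    {𝓧 : V → Type} [∀ v, MeasurableSpace (𝓧 v)]
    (X : ∀ v, Ω → 𝓧 v) (hX : ∀ v, Measurable (X v))
    (G0 : MixedGraph V) (hanc : G0.IsDirectedAncestral)
    (hfaith : Faithful μ X hX G0)
    (G : MixedGraph V) (hGanc : G.IsDirectedAncestral)
    (hme : G0.MarkovEquiv G) :
    UpStab G.minLt (ciP μ X hX) ∧ DownStab G.minLt (ciP μ X hX) := by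
  have key : ∀ i j (C : Set V), i ≠ j → i ∉ C → j ∉ C →
      (ciP μ X hX i j C ↔ G.mSep {i} {j} C) := by
    intro i j C hij hi hj
    have d1 : Disjoint ({i} : Set V) {j} := by simpa using hij
    have d2 : Disjoint ({i} : Set V) C := by simpa using hi
    have d3 : Disjoint ({j} : Set V) C := by simpa using hj
    exact (hfaith _ _ _ d1 d2 d3).symm.trans (hme _ _ _ d1 d2 d3)
  have symm : ∀ i j (C : Set V), ciP μ X hX i j C → ciP μ X hX j i C :=
    fun i j C h => CondIndepFun.symm h
  have up : ∀ i j (C : Set V), i ≠ j → i ∉ C → j ∉ C → ciP μ X hX i j C →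
      ∀ k, k ≠ i → k ≠ j → G.anc k i → ciP μ X hX i j (C ∪ {k}) := by
    intro i j C hij hi hj h k hki hkj hk
    rw [key i j C hij hi hj] at h
    rw [key i j _ hij (by simp [hi, hki.symm]) (by simp [hj, hkj.symm])]
    exact G.up_sep hGanc h hk
  constructor
  · intro i j C hij hi hj h k hki hkj hk
    rcases hk with hk | hk
    · exact up i j C hij hi hj h k hki hkj hk
    · exact symm _ _ _ (up j i C hij.symm hj hi (symm _ _ _ h) k hkj hki hk)
  · intro i j C hij hi hj h k hki hkj hk
    rw [key i j C hij hi hj] at h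
    rw [key i j _ hij (fun g => hi g.1) (fun g => hj g.1)]
    exact G.down_sep hGanc h hki hkj hk
end

section
/- Let P be a probability distribution over variables (X_v)_{v∈V} that is Markovian to a maximal directed ancestral graph G_0 and satisfies: (i) P is converse pairwise Markovian to G_0, and (ii) P satisfies ordered upward- and downward-stability w.r.t. G_0. Then sk(G_0) = sk(G(P)) for every output G(P) of a natural constraint-based structure-learning algorithm. -/
set_option linter.unusedSectionVars false
set_option linter.unusedVariables false

open MeasureTheory ProbabilityTheory

theorem stab_anSet {V : Type} [Finite V] (G : MixedGraph V) (hac : ∀ i, ¬ G.anc i i)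
    (ci : V → V → Set V → Prop) (hup : UpStab G.minLt ci) (hdown : DownStab G.minLt ci)
    (i j : V) (hij : i ≠ j) (C : Set V) (hi : i ∉ C) (hj : j ∉ C) (h : ci i j C) :
    ci i j (G.anSet i j) := by
  classical
  have h1 : ∀ S : Set V, S ⊆ G.anSet i j → ci i j (C ∪ S) := by
    intro S
    refine Set.Finite.induction_on S (Set.toFinite S) (fun _ => by simpa using h) ?_
    intro a S _ _ ih hs
    have ha := hs (Set.mem_insert a S)
    have hS : S ⊆ G.anSet i j := fun x hx => hs (Set.mem_insert_of_mem a hx)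
    have := hup i j (C ∪ S) hij
      (fun hx => hx.elim hi fun hx => (hS hx).2.1 rfl)
      (fun hx => hx.elim hj fun hx => (hS hx).2.2 rfl) (ih hS) a ha.2.1 ha.2.2 ha.1
    rwa [Set.union_assoc, Set.union_singleton] at this
  have h2 : ∀ n : ℕ, ∀ D : Set V, (D \ G.anSet i j).ncard = n → G.anSet i j ⊆ D → i ∉ D →
      j ∉ D → ci i j D → ci i j (G.anSet i j) := by
    intro n
    induction n with
    | zero =>
      intro D hn hD _ _ hc
      rw [Set.ncard_eq_zero (Set.toFinite _), Set.diff_eq_empty] at hn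
      rwa [← hn.antisymm hD]
    | succ n ih =>
      intro D hn hD hiD hjD hc
      have hne : (D \ G.anSet i j).Nonempty := by
        rw [← Set.ncard_pos (Set.toFinite _)]; omega
      haveI : IsTrans V (fun a b => G.anc b a) := ⟨fun a b c hab hbc => hbc.trans hab⟩
      haveI : Std.Irrefl (fun a b => G.anc b a) := ⟨hac⟩
      have wf : WellFounded (fun a b => G.anc b a) := Finite.wellFounded_of_trans_of_irrefl _
      obtain ⟨k, hk, hmin⟩ := wf.has_min _ hne
      have hki : k ≠ i := fun e => hiD (e ▸ hk.1)
      have hkj : k ≠ j := fun e => hjD (e ▸ hk.1)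
      have h3 : ¬ G.anc k i := fun e => hk.2 ⟨Or.inl e, hki, hkj⟩
      have h4 : ¬ G.anc k j := fun e => hk.2 ⟨Or.inr e, hki, hkj⟩
      refine ih (D \ {k}) ?_ ?_ (fun e => hiD e.1) (fun e => hjD e.1)
        (hdown i j D hij hiD hjD hc k h3 h4 ?_)
      · have : (D \ {k}) \ G.anSet i j = (D \ G.anSet i j) \ {k} := by
          ext x; simp only [Set.mem_diff]; tauto
        rw [this, Set.ncard_diff_singleton_of_mem hk]; omega
      · intro x hx
        exact ⟨hD hx, fun e => hk.2 (e ▸ hx)⟩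
      · intro l hl hkl
        by_cases hla : l ∈ G.anSet i j
        · rcases hla.1 with e | e
          · exact h3 (Relation.TransGen.trans hkl e)
          · exact h4 (Relation.TransGen.trans hkl e)
        · exact hmin l ⟨hl.1, hla⟩ hkl
  exact h2 _ (C ∪ G.anSet i j) rfl Set.subset_union_right
    (fun hx => hx.elim hi fun hx => hx.2.1 rfl)
    (fun hx => hx.elim hj fun hx => hx.2.2 rfl) (h1 _ subset_rfl)

/-- Theorem 9 of Sadeghi–Soo. -/
theorem statement_4 {V : Type} [Fintype V]
    {Ω : Type} [MeasurableSpace Ω] [StandardBorelSpace Ω] [Nonempty Ω]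
    (μ : Measure Ω) [IsProbabilityMeasure μ]
    {𝓧 : V → Type} [∀ v, MeasurableSpace (𝓧 v)]
    (X : ∀ v, Ω → 𝓧 v) (hX : ∀ v, Measurable (X v))
    (G0 : MixedGraph V) (hanc : G0.IsDirectedAncestral) (hmax : G0.Maximal)
    (hMark : Markovian μ X hX G0)
    (hconv : ConvPairwiseMarkov μ X hX G0)
    (hup : UpStab G0.minLt (ciP μ X hX)) (hdown : DownStab G0.minLt (ciP μ X hX)) :
    ∀ H : MixedGraph V, NaturalOutput (ciP μ X hX) H →
      ∀ i j, G0.adj i j ↔ H.adj i j := by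
  intro H hH i j
  rw [hH.1 i j]
  obtain ⟨_, ha2, _, _, ha5, _⟩ := hanc
  constructor
  · intro hadj
    have hij : i ≠ j := by
      rintro rfl
      rcases hadj with e | e | e
      · exact ha5 _ (Relation.TransGen.single e)
      · exact ha5 _ (Relation.TransGen.single e)
      · exact ha2 _ e
    refine ⟨hij, ?_⟩
    rintro ⟨C, hi, hj, hc⟩
    exact hconv i j hij (stab_anSet G0 ha5 _ hup hdown i j hij C hi hj hc) hadj
  · rintro ⟨hij, hno⟩
    by_contra hadj
    obtain ⟨C, hi, hj, hs⟩ := hmax i j hij hadj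
    exact hno ⟨C, hi, hj, hMark {i} {j} C (by simpa using hij) (by simpa using hi)
      (by simpa using hj) hs⟩
end

section
/- Let P be a probability distribution over variables (X_v)_{v∈V} that is Markovian to a maximal directed ancestral graph G_0, is converse pairwise Markovian to G_0, and satisfies ordered upward- and downward-stability w.r.t. G_0. Then P is minimally Markovian to G_0, i.e., P is Markovian to G_0 and sk(G_0) = sk(P). -/
set_option linter.unusedSectionVars false
set_option linter.unusedVariables false

open MeasureTheory ProbabilityTheory

theorem aux_up {V : Type} [Fintype V] (G : MixedGraph V) (ci : V → V → Set V → Prop)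
    (hup : UpStab G.minLt ci) (i j : V) (hij : i ≠ j) (C : Set V) (hi : i ∉ C) (hj : j ∉ C)
    (h : ci i j C) : ∀ S : Set V, S ⊆ G.anSet i j → ci i j (C ∪ S) := by
  intro S
  induction S, Set.toFinite S using Set.Finite.induction_on with
  | empty => intro _; simpa using h
  | @insert a S ha hS ih =>
    intro hsub
    have hS' : S ⊆ G.anSet i j := fun x hx => hsub (Set.mem_insert_of_mem _ hx)
    obtain ⟨h1, h2, h3⟩ := hsub (Set.mem_insert a S)
    have hiS : i ∉ C ∪ S := by
      rintro (hx | hx)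
      · exact hi hx
      · exact (hS' hx).2.1 rfl
    have hjS : j ∉ C ∪ S := by
      rintro (hx | hx)
      · exact hj hx
      · exact (hS' hx).2.2 rfl
    have := hup i j (C ∪ S) hij hiS hjS (ih hS') a h2 h3 h1
    have e : C ∪ insert a S = C ∪ S ∪ {a} := by
      ext x; simp only [Set.mem_union, Set.mem_insert_iff, Set.mem_singleton_iff]; tauto
    rw [e]; exact this

theorem aux_down {V : Type} [Fintype V] (G : MixedGraph V) (hG : ∀ i, ¬ G.anc i i)
    (ci : V → V → Set V → Prop)
    (hdown : DownStab G.minLt ci) (i j : V) (hij : i ≠ j) :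
    ∀ (n : ℕ) (D : Set V), (D \ G.anSet i j).ncard = n → G.anSet i j ⊆ D → i ∉ D → j ∉ D →
      ci i j D → ci i j (G.anSet i j) := by
  intro n
  induction n with
  | zero =>
    intro D hn hsub hi hj h
    rw [Set.ncard_eq_zero (Set.toFinite _), Set.diff_eq_empty] at hn
    rwa [Set.Subset.antisymm hsub hn]
  | succ n ih =>
    intro D hn hsub hi hj h
    have hne : (D \ G.anSet i j).Nonempty := by
      rw [← Set.ncard_pos (Set.toFinite _)]; omega
    haveI : IsTrans V (fun a b => G.anc b a) := ⟨fun a b c hab hbc => Relation.TransGen.trans hbc hab⟩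
    haveI : Std.Irrefl (fun a b : V => G.anc b a) := ⟨fun a => hG a⟩
    have wf : WellFounded (fun a b : V => G.anc b a) := Finite.wellFounded_of_trans_of_irrefl _
    obtain ⟨k, ⟨hkD, hkn⟩, hmin⟩ := wf.has_min _ hne
    have hki : k ≠ i := fun e => hi (e ▸ hkD)
    have hkj : k ≠ j := fun e => hj (e ▸ hkD)
    have h1 : ¬ G.anc k i := fun e => hkn ⟨Or.inl e, hki, hkj⟩
    have h2 : ¬ G.anc k j := fun e => hkn ⟨Or.inr e, hki, hkj⟩
    have h3 : ∀ l ∈ D \ {k}, ¬ G.anc k l := by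
      intro l hl hkl
      by_cases hla : l ∈ G.anSet i j
      · rcases hla.1 with e | e
        · exact h1 (Relation.TransGen.trans hkl e)
        · exact h2 (Relation.TransGen.trans hkl e)
      · exact hmin l ⟨hl.1, hla⟩ hkl
    refine ih (D \ {k}) ?_ ?_ (fun hx => hi hx.1) (fun hx => hj hx.1)
      (hdown i j D hij hi hj h k h1 h2 h3)
    · have e : (D \ {k}) \ G.anSet i j = (D \ G.anSet i j) \ {k} := by
        ext x; simp only [Set.mem_diff, Set.mem_singleton_iff]; tauto
      rw [e, Set.ncard_sdiff_singleton_of_mem (show k ∈ D \ G.anSet i j from ⟨hkD, hkn⟩), hn]; rfl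
    · intro x hx
      exact ⟨hsub hx, fun e => hkn (Set.mem_singleton_iff.1 e ▸ hx)⟩

/-- Corollary 10 of Sadeghi–Soo. -/
theorem statement_5 {V : Type} [Fintype V]
    {Ω : Type} [MeasurableSpace Ω] [StandardBorelSpace Ω] [Nonempty Ω]
    (μ : Measure Ω) [IsProbabilityMeasure μ]
    {𝓧 : V → Type} [∀ v, MeasurableSpace (𝓧 v)]
    (X : ∀ v, Ω → 𝓧 v) (hX : ∀ v, Measurable (X v))
    (G0 : MixedGraph V) (hanc : G0.IsDirectedAncestral) (hmax : G0.Maximal)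
    (hMark : Markovian μ X hX G0)
    (hconv : ConvPairwiseMarkov μ X hX G0)
    (hup : UpStab G0.minLt (ciP μ X hX)) (hdown : DownStab G0.minLt (ciP μ X hX)) :
    Markovian μ X hX G0 ∧ (∀ i j, G0.adj i j ↔ skP (ciP μ X hX) i j) := by
  refine ⟨hMark, fun i j => ⟨fun hadj => ?_, fun hsk => ?_⟩⟩
  · obtain ⟨-, harc, -, -, hcyc, -⟩ := hanc
    have hij : i ≠ j := by
      rintro rfl
      rcases hadj with h | h | h
      · exact hcyc i (Relation.TransGen.single h)
      · exact hcyc i (Relation.TransGen.single h)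
      · exact harc i h
    refine ⟨hij, ?_⟩
    rintro ⟨C, hi, hj, h⟩
    have h1 := aux_up G0 _ hup i j hij C hi hj h (G0.anSet i j) (Set.Subset.refl _)
    refine hconv i j hij ?_ hadj
    refine aux_down G0 hcyc _ hdown i j hij _ _ rfl Set.subset_union_right ?_ ?_ h1
    · rintro (hx | hx)
      · exact hi hx
      · exact hx.2.1 rfl
    · rintro (hx | hx)
      · exact hj hx
      · exact hx.2.2 rfl
  · by_contra hadj
    obtain ⟨C, hi, hj, h⟩ := hmax i j hsk.1 hadj
    refine hsk.2 ⟨C, hi, hj, hMark {i} {j} C ?_ ?_ ?_ h⟩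
    · simpa using hsk.1
    · simpa using hi
    · simpa using hj
end

section
/- If a probability distribution P over variables (X_v)_{v∈V} is path-stable, then P satisfies the uniqueness property: any two maximal directed ancestral graphs with skeleton sk(P), w.r.t. each of which P satisfies ordered upward- and downward-stability, are Markov equivalent. -/
set_option linter.unusedSectionVars false
set_option linter.unusedVariables false

open MeasureTheory ProbabilityTheory

namespace MPath
open MixedGraph
variable {V : Type}

theorem headInto_anc {G : MixedGraph V} (hG : G.IsDirectedAncestral) {a b : V}
    (h : G.anc a b) (h2 : G.headInto b a) : False := by
  obtain ⟨h1, h3, h4, h5, h6, h7⟩ := hG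
  rcases h2 with h2 | h2
  · exact h6 a (Relation.TransGen.tail h h2)
  · exact (h7 b a h2).2 h

theorem anc_arrow {G : MixedGraph V} {a b : V} (h : G.arrow a b) : G.anc a b :=
  Relation.TransGen.single h

theorem anc_trans {G : MixedGraph V} {a b c : V} (h : G.anc a b) (h2 : G.anc b c) : G.anc a c :=
  Relation.TransGen.trans h h2

theorem adj_symm {G : MixedGraph V} (hG : G.IsDirectedAncestral) {a b : V}
    (h : G.adj a b) : G.adj b a := by
  rcases h with h | h | h
  · exact Or.inr (Or.inl h)
  · exact Or.inl h
  · exact Or.inr (Or.inr ((hG.1 a b).1 h))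

theorem adj_cases {G : MixedGraph V} {a b : V}
    (h : G.adj a b) : G.headInto a b ∨ G.arrow b a := by
  rcases h with h | h | h
  · exact Or.inl (Or.inl h)
  · exact Or.inr h
  · exact Or.inl (Or.inr h)

theorem headInto_arrow {G : MixedGraph V} (hG : G.IsDirectedAncestral) {a b : V}
    (h : G.arrow a b) (h2 : G.headInto b a) : False :=
  headInto_anc hG (anc_arrow h) h2

theorem headInto_adj {G : MixedGraph V} {a b : V}
    (h : G.headInto a b) : G.adj a b := by
  rcases h with h | h
  · exact Or.inl h
  · exact Or.inr (Or.inr h)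

theorem adj_ne {G : MixedGraph V} (hG : G.IsDirectedAncestral) {a b : V}
    (h : G.adj a b) : a ≠ b := by
  rintro rfl
  rcases h with h | h | h
  · exact hG.2.2.2.2.1 a (anc_arrow h)
  · exact hG.2.2.2.2.1 a (anc_arrow h)
  · exact hG.2.1 a h

/-- an arrow follows from ancestry plus adjacency -/
theorem arrow_of_anc {G : MixedGraph V} (hG : G.IsDirectedAncestral) {a b : V}
    (h : G.adj a b) (h2 : G.anc a b) : G.arrow a b := by
  rcases adj_cases (adj_symm hG h) with h | h
  · exact (headInto_anc hG h2 h).elim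
  · exact h

/-- if `d *→ c → a` and `d ~ a`, then `d *→ a` -/
theorem headInto_of_chain {G : MixedGraph V} (hG : G.IsDirectedAncestral) {d c a : V}
    (h1 : G.headInto d c) (h2 : G.arrow c a) (h3 : G.adj d a) : G.headInto d a := by
  rcases adj_cases h3 with h | h
  · exact h
  · exact (headInto_anc hG (anc_trans (anc_arrow h2) (anc_arrow h)) h1).elim

def OK (G : MixedGraph V) (C : Set V) (a b c : V) : Prop :=
  (G.collider a b c → b ∈ C ∨ ∃ x ∈ C, G.anc b x) ∧ (¬ G.collider a b c → b ∉ C)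

theorem collider_symm {G : MixedGraph V} {a b c : V} : G.collider a b c ↔ G.collider c b a :=
  ⟨fun h => ⟨h.2, h.1⟩, fun h => ⟨h.2, h.1⟩⟩

theorem OK_symm {G : MixedGraph V} {C : Set V} {a b c : V} (h : OK G C a b c) : OK G C c b a := by
  unfold OK at *; rwa [collider_symm]

structure Conn (G : MixedGraph V) (C : Set V) (n : ℕ) (v : ℕ → V) : Prop where
  inj : ∀ a b, a ≤ n → b ≤ n → v a = v b → a = b
  adj : ∀ a b, b = a + 1 → b ≤ n → G.adj (v a) (v b)
  ok : ∀ a b c, b = a + 1 → c = b + 1 → c ≤ n → OK G C (v a) (v b) (v c)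

theorem conn_iff (G : MixedGraph V) (A B C : Set V) :
    G.mSep A B C ↔ ¬ ∃ n v, Conn G C n v ∧ v 0 ∈ A ∧ v n ∈ B := by
  unfold mSep
  refine not_congr ⟨?_, ?_⟩
  · rintro ⟨p, ⟨h1, h2, h3⟩, ⟨a, ha, ha'⟩, ⟨b, hb, hb'⟩⟩
    have hp : p ≠ [] := by rintro rfl; simp at ha'
    have hl : 0 < p.length := List.length_pos_of_ne_nil hp
    refine ⟨p.length - 1, fun u => p.getD u a, ⟨?_, ?_, ?_⟩, ?_, ?_⟩
    · intro x y hx hy hxy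
      have hx' : x < p.length := by omega
      have hy' : y < p.length := by omega
      simp only [List.getD_eq_getElem _ _ hx', List.getD_eq_getElem _ _ hy'] at hxy
      exact (List.Nodup.getElem_inj_iff h1).1 hxy
    · rintro x y rfl hy
      have hx' : x < p.length := by omega
      have hy' : x + 1 < p.length := by omega
      simp only [List.getD_eq_getElem _ _ hx', List.getD_eq_getElem _ _ hy']
      exact List.isChain_iff_getElem.1 h2 x hy'
    · rintro x y z rfl rfl hz
      have hx' : x < p.length := by omega
      have hy' : x + 1 < p.length := by omega
      have hz' : x + 1 + 1 < p.length := by omega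
      simp only [List.getD_eq_getElem _ _ hx', List.getD_eq_getElem _ _ hy',
        List.getD_eq_getElem _ _ hz']
      exact h3 (x+1) (by omega) (by omega) hy' hz'
    · simp only [List.getD_eq_getElem _ _ hl]
      rw [List.head?_eq_getElem?, List.getElem?_eq_getElem hl] at ha'
      simp only [Option.some.injEq] at ha'
      rwa [ha']
    · have hl' : p.length - 1 < p.length := by omega
      simp only [List.getD_eq_getElem _ _ hl']
      rw [List.getLast?_eq_getElem?, List.getElem?_eq_getElem hl'] at hb'
      simp only [Option.some.injEq] at hb'
      rwa [hb']
  · rintro ⟨n, v, h, ha, hb⟩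
    refine ⟨(List.range (n+1)).map v, ⟨?_, ?_, ?_⟩, ⟨v 0, ha, ?_⟩, ⟨v n, hb, ?_⟩⟩
    · refine List.Nodup.map_on ?_ List.nodup_range
      intro x hx y hy hxy
      simp at hx hy
      exact h.inj x y (by omega) (by omega) hxy
    · refine List.isChain_iff_getElem.2 ?_
      intro i hi
      simp at hi
      simp only [List.getElem_map, List.getElem_range]
      exact h.adj _ _ rfl (by omega)
    · intro t ht h1 h2 h3
      simp at h3
      simp only [List.get_eq_getElem, List.getElem_map, List.getElem_range]
      exact h.ok (t-1) t (t+1) (by omega) rfl (by omega)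
    · simp [List.head?_eq_getElem?]
    · simp [List.getLast?_eq_getElem?]

theorem Conn.rev {G : MixedGraph V} (hG : G.IsDirectedAncestral) {C : Set V} {n : ℕ} {v : ℕ → V}
    (h : Conn G C n v) : Conn G C n (fun u => v (n - u)) := by
  refine ⟨?_, ?_, ?_⟩
  · intro a b ha hb hab
    have := h.inj _ _ (by omega) (by omega) hab
    omega
  · intro a b hb hn
    exact adj_symm hG (h.adj _ _ (by omega) (by omega))
  · intro a b c hb hc hn
    exact OK_symm (h.ok _ _ _ (by omega) (by omega) (by omega))

/-- deletion of the segment strictly between `l` and `r` -/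
theorem Conn.del {G : MixedGraph V} {C : Set V} {n : ℕ} {v : ℕ → V}
    (h : Conn G C n v) {l r : ℕ} (hlr : l + 2 ≤ r) (hr : r ≤ n) (hadj : G.adj (v l) (v r))
    (hl : ∀ a, l = a + 1 → OK G C (v a) (v l) (v r))
    (hr' : ∀ c, c = r + 1 → c ≤ n → OK G C (v l) (v r) (v c)) :
    Conn G C (n - (r - l - 1)) (fun u => if u ≤ l then v u else v (u + (r - l - 1))) := by
  refine ⟨?_, ?_, ?_⟩
  · intro a b ha hb hab
    split_ifs at hab
    all_goals
      have := h.inj _ _ (by omega) (by omega) hab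
      omega
  · rintro a b rfl hn
    split_ifs with h1 h2 h2
    · exact h.adj _ _ rfl (by omega)
    · have e1 : a = l := by omega
      have e2 : a + 1 + (r - l - 1) = r := by omega
      rw [e1] at *
      rw [e2]; exact hadj
    · omega
    · exact h.adj _ _ (by omega) (by omega)
  · rintro a b c rfl rfl hn
    split_ifs with h1 h2 h3 h2 h3 h3 h3
    any_goals omega
    · exact h.ok _ _ _ rfl rfl (by omega)
    · have e1 : a + 1 = l := by omega
      have e2 : a + 1 + 1 + (r - l - 1) = r := by omega
      rw [e2, e1]; exact hl a e1.symm
    · have e1 : a = l := by omega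
      have e2 : a + 1 + (r - l - 1) = r := by omega
      rw [e2, e1]; exact hr' _ (by omega) (by omega)
    · exact h.ok _ _ _ (by omega) (by omega) (by omega)

theorem Conn.ins {G : MixedGraph V} {C : Set V} {n : ℕ} {v : ℕ → V}
    (h : Conn G C n v) {l r : ℕ} {x : V} (hlr : l + 2 ≤ r) (hr : r ≤ n)
    (hx : ∀ u, u ≤ n → v u ≠ x)
    (hadj : G.adj (v l) x) (hadj' : G.adj x (v r))
    (hl : ∀ a, l = a + 1 → OK G C (v a) (v l) x)
    (hm : OK G C (v l) x (v r))
    (hr' : ∀ c, c = r + 1 → c ≤ n → OK G C x (v r) (v c)) :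
    Conn G C (n - (r - l - 2))
      (fun u => if u ≤ l then v u else if u = l + 1 then x else v (u + (r - l - 2))) := by
  refine ⟨?_, ?_, ?_⟩
  · intro a b ha hb hab
    split_ifs at hab
    any_goals omega
    any_goals first
      | exact (hx _ (by omega) hab).elim
      | exact (hx _ (by omega) hab.symm).elim
    all_goals
      have := h.inj _ _ (by omega) (by omega) hab
      omega
  · rintro a b rfl hn
    split_ifs
    any_goals omega
    · exact h.adj _ _ rfl (by omega)
    · have e1 : a = l := by omega
      rw [e1]; exact hadj
    · have e2 : a + 1 + (r - l - 2) = r := by omega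
      rw [e2]; exact hadj'
    · exact h.adj _ _ (by omega) (by omega)
  · rintro a b c rfl rfl hn
    split_ifs
    any_goals omega
    · exact h.ok _ _ _ rfl rfl (by omega)
    · have e1 : a + 1 = l := by omega
      rw [e1]; exact hl a e1.symm
    · have e1 : a = l := by omega
      have e2 : a + 1 + 1 + (r - l - 2) = r := by omega
      rw [e2, e1]; exact hm
    · have e2 : a + 1 + (r - l - 2) = r := by omega
      rw [e2]; exact hr' _ (by omega) (by omega)
    · exact h.ok _ _ _ (by omega) (by omega) (by omega)

theorem exists_dirPath {G : MixedGraph V} {a b : V} (h : G.anc a b) :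
    ∃ (l : ℕ) (x : ℕ → V), 0 < l ∧ x 0 = a ∧ x l = b ∧ ∀ u, u < l → G.arrow (x u) (x (u+1)) := by
  unfold MixedGraph.anc at h
  induction h using Relation.TransGen.head_induction_on with
  | single h =>
    rename_i a'
    refine ⟨1, fun u => if u = 0 then a' else b, by omega, by simp, by simp, ?_⟩
    intro u hu
    obtain rfl : u = 0 := by omega
    simpa using h
  | head h1 h2 ih =>
    rename_i a' c'
    obtain ⟨l, x, hl, h0, hl', hx⟩ := ih
    refine ⟨l+1, fun u => if u = 0 then a' else x (u-1), by omega, by simp, by simp [hl'], ?_⟩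
    intro u hu
    rcases Nat.eq_zero_or_pos u with rfl | hu0
    · simpa [h0] using h1
    · have e : u ≠ 0 := by omega
      have e2 : u - 1 + 1 = u := by omega
      have := hx (u-1) (by omega)
      rw [e2] at this
      simpa [e] using this

theorem dirPath_anc {G : MixedGraph V} {l : ℕ} {x : ℕ → V}
    (hx : ∀ u, u < l → G.arrow (x u) (x (u+1))) (a : ℕ) :
    ∀ b, a < b → b ≤ l → G.anc (x a) (x b) := by
  intro b
  induction b with
  | zero => intro h; omega
  | succ b ih =>
    intro h1 h2
    rcases Nat.lt_or_ge a b with h | h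
    · exact Relation.TransGen.tail (ih h (by omega)) (hx b (by omega))
    · obtain rfl : a = b := by omega
      exact anc_arrow (hx a (by omega))

/-- the key consequence of maximality -/
theorem disc {G : MixedGraph V} (hG : G.IsDirectedAncestral) (hmax : G.Maximal)
    {v : ℕ → V} {j : V} {t m : ℕ} (htm : t ≤ m)
    (inj : ∀ a b, t ≤ a → a ≤ m + 1 → t ≤ b → b ≤ m + 1 → v a = v b → a = b)
    (hj : ∀ u, t ≤ u → u ≤ m + 1 → v u ≠ j)
    (hl : ∀ a b, b = a + 1 → t ≤ a → b ≤ m → G.headInto (v a) (v b))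
    (hr : ∀ a b, b = a + 1 → t ≤ a → a ≤ m → G.headInto (v b) (v a))
    (hn : ¬ G.adj j (v (m+1)))
    (harr : ∀ u, t < u → u ≤ m → G.arrow (v u) j)
    (hk : G.headInto j (v t)) :
    ¬ G.anc (v t) (v (m+1)) ∧ ¬ G.anc (v t) j := by
  refine ⟨?_, fun h => headInto_anc hG h hk⟩
  intro hanc
  obtain ⟨C, hjC, hiC, hsep⟩ := hmax j (v (m+1)) (hj _ (by omega) (by omega)).symm hn
  rw [conn_iff] at hsep
  have key : ∀ d u, m - u = d → t < u → u ≤ m → v u ∈ C := by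
    intro d
    induction d using Nat.strong_induction_on with
    | _ d ih =>
    intro u hd hu hum
    by_contra hcon
    refine hsep ⟨m + 2 - u, fun w => if w = 0 then j else v (u + w - 1), ⟨?_, ?_, ?_⟩, ?_, ?_⟩
    · intro a b ha hb hab
      split_ifs at hab
      · omega
      · exact (hj _ (by omega) (by omega) hab.symm).elim
      · exact (hj _ (by omega) (by omega) hab).elim
      · have := inj _ _ (by omega) (by omega) (by omega) (by omega) hab
        omega
    · rintro a b rfl hb
      split_ifs with h0
      any_goals (exfalso; assumption)
      · subst h0
        exact Or.inr (Or.inl (harr _ (by omega) (by omega)))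
      · exact adj_symm hG (headInto_adj (hr _ _ (by omega) (by omega) (by omega)))
    · rintro a b c rfl rfl hc
      simp only [Nat.add_eq_zero_iff, one_ne_zero, and_false, if_false]
      split_ifs with h0
      · subst h0
        have e : u + (0 + 1) - 1 = u := by omega
        rw [e]
        refine ⟨fun hc => ?_, fun _ => hcon⟩
        exact (headInto_arrow hG (harr u hu hum) hc.1).elim
      · have e : v (u + (a + 1) - 1) ∈ C := ih _ (by omega) _ rfl (by omega) (by omega)
        refine ⟨fun _ => Or.inl e, fun h => ?_⟩
        exact (h ⟨hl _ _ (by omega) (by omega) (by omega),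
          hr _ _ (by omega) (by omega) (by omega)⟩).elim
    · simp
    · have e : m + 2 - u ≠ 0 := by omega
      have e2 : u + (m + 2 - u) - 1 = m + 1 := by omega
      simp [e, e2]
  have key2 : ∀ u, t < u → u ≤ m → v u ∈ C := fun u => key _ u rfl
  have hnc : ¬ (v t ∈ C ∨ ∃ x ∈ C, G.anc (v t) x) := by
    intro hc
    refine hsep ⟨m + 2 - t, fun w => if w = 0 then j else v (t + w - 1), ⟨?_, ?_, ?_⟩, ?_, ?_⟩
    · intro a b ha hb hab
      split_ifs at hab
      · omega
      · exact (hj _ (by omega) (by omega) hab.symm).elim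
      · exact (hj _ (by omega) (by omega) hab).elim
      · have := inj _ _ (by omega) (by omega) (by omega) (by omega) hab
        omega
    · rintro a b rfl hb
      split_ifs with h0
      any_goals (exfalso; assumption)
      · subst h0
        exact headInto_adj hk
      · exact adj_symm hG (headInto_adj (hr _ _ (by omega) (by omega) (by omega)))
    · rintro a b c rfl rfl hc
      simp only [Nat.add_eq_zero_iff, one_ne_zero, and_false, if_false]
      split_ifs with h0
      · subst h0
        have e : t + (0 + 1) - 1 = t := by omega
        rw [e]
        refine ⟨fun _ => by assumption, fun h => ?_⟩
        exact (h ⟨hk, hr _ _ (by omega) (by omega) (by omega)⟩).elim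
      · have e : v (t + (a + 1) - 1) ∈ C := key2 _ (by omega) (by omega)
        refine ⟨fun _ => Or.inl e, fun h => ?_⟩
        exact (h ⟨hl _ _ (by omega) (by omega) (by omega),
          hr _ _ (by omega) (by omega) (by omega)⟩).elim
    · simp
    · have e : m + 2 - t ≠ 0 := by omega
      have e2 : t + (m + 2 - t) - 1 = m + 1 := by omega
      simp [e, e2]
  obtain ⟨l, x, hl0, hx0, hxl, hx⟩ := exists_dirPath hanc
  have hxa := dirPath_anc hx
  have hxC : ∀ u, u < l → x u ∉ C := by
    intro u hu huC
    rcases Nat.eq_zero_or_pos u with rfl | hu0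
    · exact hnc (Or.inl (hx0 ▸ huC))
    · exact hnc (Or.inr ⟨x u, huC, hx0 ▸ hxa 0 u hu0 hu.le⟩)
  have hxj : ∀ u, u ≤ l → x u ≠ j := by
    intro u hu huj
    rcases Nat.eq_zero_or_pos u with rfl | hu0
    · exact hj t le_rfl (by omega) (hx0 ▸ huj)
    · have := hxa 0 u hu0 hu
      rw [hx0, huj] at this
      exact headInto_anc hG this hk
  refine hsep ⟨l + 1, fun w => if w = 0 then j else x (w - 1), ⟨?_, ?_, ?_⟩, ?_, ?_⟩
  · intro a b ha hb hab
    split_ifs at hab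
    · omega
    · exact (hxj _ (by omega) hab.symm).elim
    · exact (hxj _ (by omega) hab).elim
    · rcases lt_trichotomy (a-1) (b-1) with h | h | h
      · have := hxa _ _ h (by omega)
        rw [hab] at this
        exact (hG.2.2.2.2.1 _ this).elim
      · omega
      · have := hxa _ _ h (by omega)
        rw [hab] at this
        exact (hG.2.2.2.2.1 _ this).elim
  · rintro a b rfl hb
    split_ifs with h0
    any_goals (exfalso; assumption)
    · subst h0
      simp only [zero_add, Nat.sub_self, hx0]
      exact headInto_adj hk
    · have := hx (a-1) (by omega)
      have e : a - 1 + 1 = a := by omega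
      rw [e] at this
      exact Or.inl this
  · rintro a b c rfl rfl hc
    simp only [Nat.add_eq_zero_iff, one_ne_zero, and_false, if_false, Nat.add_sub_cancel]
    refine ⟨fun h => ?_, fun _ => hxC _ (by omega)⟩
    exact (headInto_arrow hG (hx a (by omega)) h.2).elim
  · simp
  · simp [hxl]

section ci
variable [Fintype V] {ci : V → V → Set V → Prop}

noncomputable def rk (G : MixedGraph V) (a : V) : ℕ := {b | G.anc a b}.ncard + 1

theorem rk_lt {G : MixedGraph V} (hG : G.IsDirectedAncestral) {a b : V} (h : G.anc a b) :
    rk G b < rk G a := by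
  unfold rk
  refine Nat.add_lt_add_right (Set.ncard_lt_ncard ?_ (Set.toFinite _)) 1
  refine ⟨fun x hx => anc_trans h hx, fun hsub => ?_⟩
  exact hG.2.2.2.2.1 b (hsub h)

theorem pairwise {K : MixedGraph V} (hK : K.IsDirectedAncestral) (up : UpStab K.minLt ci)
    (down : DownStab K.minLt ci) {i j : V} (hij : i ≠ j)
    (h : ∃ C : Set V, i ∉ C ∧ j ∉ C ∧ ci i j C) : ci i j (K.anSet i j) := by
  obtain ⟨C0, hi, hj, h⟩ := h
  have h1 : ∀ S : Set V, S ⊆ K.anSet i j → ci i j (C0 ∪ S) := by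
    intro S
    induction S, Set.toFinite S using Set.Finite.induction_on with
    | empty => intro _; simpa using h
    | insert ha hs ih =>
      rename_i a s
      intro hsub
      have h2 := ih ((Set.subset_insert _ _).trans hsub)
      have ha' := hsub (Set.mem_insert _ _)
      have hs' : ∀ x ∈ s, x ≠ i ∧ x ≠ j := fun x hx => (hsub (Set.mem_insert_of_mem _ hx)).2
      have := up i j (C0 ∪ s) hij (by rintro (h | h); exacts [hi h, (hs' _ h).1 rfl])
        (by rintro (h | h); exacts [hj h, (hs' _ h).2 rfl]) h2 a ha'.2.1 ha'.2.2 ha'.1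
      convert this using 1
      ext x; simp
  have h2 : ∀ (d : ℕ) (D : Set V), D.ncard = d → K.anSet i j ⊆ D → i ∉ D → j ∉ D → ci i j D →
      ci i j (K.anSet i j) := by
    intro d
    induction d using Nat.strong_induction_on with
    | _ d ih =>
    intro D hd hsub hi hj hD
    by_cases hne : (D \ K.anSet i j).Nonempty
    · obtain ⟨k, hk, hmin⟩ := Set.exists_min_image (D \ K.anSet i j) (rk K) (Set.toFinite _) hne
      have hki : k ≠ i := fun e => hi (e ▸ hk.1)
      have hkj : k ≠ j := fun e => hj (e ▸ hk.1)
      have n1 : ¬ K.anc k i := fun h => hk.2 ⟨Or.inl h, hki, hkj⟩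
      have n2 : ¬ K.anc k j := fun h => hk.2 ⟨Or.inr h, hki, hkj⟩
      refine ih _ ?_ (D \ {k}) rfl ?_ (fun h => hi h.1) (fun h => hj h.1) ?_
      · rw [← hd]
        exact Set.ncard_sdiff_singleton_lt_of_mem hk.1
      · intro x hx
        exact ⟨hsub hx, fun e => hk.2 (by rw [← (e : x = k)]; exact hx)⟩
      · refine down i j D hij hi hj hD k n1 n2 ?_
        intro l hl hkl
        have hkl' : K.anc k l := hkl
        by_cases hla : l ∈ K.anSet i j
        · rcases hla.1 with h | h
          · exact n1 (anc_trans hkl' h)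
          · exact n2 (anc_trans hkl' h)
        · have := hmin l ⟨hl.1, hla⟩
          have := rk_lt hK hkl'
          omega
    · have : D = K.anSet i j := by
        refine Set.Subset.antisymm ?_ hsub
        intro x hx
        by_contra hx'
        exact hne ⟨x, hx, hx'⟩
      rwa [← this]
  refine h2 _ (C0 ∪ K.anSet i j) rfl Set.subset_union_right ?_ ?_ (h1 _ le_rfl)
  · rintro (h | h)
    · exact hi h
    · exact h.2.1 rfl
  · rintro (h | h)
    · exact hj h
    · exact h.2.2 rfl

theorem star (hps : PathStable ci) {K L : MixedGraph V} (hK : K.IsDirectedAncestral)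
    (upK : UpStab K.minLt ci) (downK : DownStab K.minLt ci) (upL : UpStab L.minLt ci)
    {v : ℕ → V} {j : V} {s m : ℕ} (hsm : s ≤ m)
    (inj : ∀ a b, s ≤ a → a ≤ m + 1 → s ≤ b → b ≤ m + 1 → v a = v b → a = b)
    (hj : ∀ u, s ≤ u → u ≤ m + 1 → v u ≠ j)
    (hadj : ∀ a b, b = a + 1 → s ≤ a → a ≤ m → skP ci (v b) (v a))
    (hadjj : ∀ u, s ≤ u → u ≤ m → skP ci (v u) j)
    (hn : ¬ skP ci (v (m+1)) j)
    (hU : ∀ u, s < u → u ≤ m → K.anc (v u) (v (m+1)) ∨ K.anc (v u) j)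
    (hk : L.anc (v s) (v (m+1)) ∨ L.anc (v s) j) :
    K.anc (v s) (v (m+1)) ∨ K.anc (v s) j := by
  by_contra hcon
  apply hps
  have hij : v (m+1) ≠ j := hj _ (by omega) le_rfl
  have hki : v s ≠ v (m+1) := fun h => by
    have := inj _ _ le_rfl (by omega) (by omega) le_rfl h
    omega
  have hkj : v s ≠ j := hj _ le_rfl (by omega)
  have hex : ∃ C : Set V, v (m+1) ∉ C ∧ j ∉ C ∧ ci (v (m+1)) j C := by
    by_contra h
    exact hn ⟨hij, h⟩
  have hci := pairwise hK upK downK hij hex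
  have hin : v (m+1) ∉ K.anSet (v (m+1)) j := fun h => h.2.1 rfl
  have hjn : j ∉ K.anSet (v (m+1)) j := fun h => h.2.2 rfl
  have hcik := upL _ _ _ hij hin hjn hci (v s) hki hkj hk
  set is : List V := (List.range (m - s)).map (fun u => v (m - u)) with his
  have hmem : ∀ x, x ∈ is → ∃ u, s < u ∧ u ≤ m ∧ x = v u := by
    intro x hx
    rw [his, List.mem_map] at hx
    obtain ⟨u, hu, rfl⟩ := hx
    rw [List.mem_range] at hu
    exact ⟨m - u, by omega, by omega, rfl⟩
  have hU' : {x | x ∈ is} ∪ K.anSet (v (m+1)) j = K.anSet (v (m+1)) j := by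
    refine Set.union_eq_right.2 ?_
    intro x hx
    obtain ⟨u, h1, h2, rfl⟩ := hmem x hx
    refine ⟨hU u h1 h2, ?_, hj _ (by omega) (by omega)⟩
    intro e
    have := inj _ _ (by omega) (by omega) (by omega) (by omega) e
    omega
  have hlist : v (m+1) :: (is ++ [v s, j])
      = (List.range (m - s + 2)).map (fun u => v (m + 1 - u)) ++ [j] := by
    rw [List.range_succ, List.range_succ_eq_map]
    have e : m + 1 - (m - s + 1) = s := by omega
    simp [his, e, Function.comp_def]
  refine ⟨v (m+1), v s, j, is, K.anSet (v (m+1)) j, ?_, ?_, hn, ?_, hin, hjn, ?_, ?_, ?_⟩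
  · rw [hlist, List.nodup_append]
    refine ⟨?_, by simp, ?_⟩
    · refine List.Nodup.map_on ?_ List.nodup_range
      intro x hx y hy hxy
      rw [List.mem_range] at hx hy
      have := inj _ _ (by omega) (by omega) (by omega) (by omega) hxy
      omega
    · intro x hx y hy
      rw [List.mem_map] at hx
      obtain ⟨u, hu, rfl⟩ := hx
      rw [List.mem_range] at hu
      rw [List.mem_singleton] at hy
      rw [hy]
      exact hj _ (by omega) (by omega)
  · rw [hlist]
    refine List.isChain_iff_getElem.2 ?_
    intro u hu
    simp only [List.length_append, List.length_map, List.length_range, List.length_singleton] at hu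
    rcases Nat.lt_or_ge (u+1) (m - s + 2) with h | h
    · rw [List.getElem_append_left (by simp; omega), List.getElem_append_left (by simp; omega)]
      simp only [List.getElem_map, List.getElem_range]
      exact hadj _ _ (by omega) (by omega) (by omega)
    · rw [List.getElem_append_left (by simp; omega), List.getElem_append_right (by simp; omega)]
      simp only [List.getElem_map, List.getElem_range, List.getElem_singleton]
      exact hadjj _ (by omega) (by omega)
  · intro x hx
    obtain ⟨u, h1, h2, rfl⟩ := hmem x hx
    exact hadjj _ (by omega) (by omega)
  · exact fun h => hcon h.1
  · rw [hU']; exact hci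
  · rw [hU']; exact hcik

structure Good (ci : V → V → Set V → Prop) (K : MixedGraph V) : Prop where
  anc : K.IsDirectedAncestral
  max : K.Maximal
  sk : ∀ i j, K.adj i j ↔ skP ci i j
  up : UpStab K.minLt ci
  down : DownStab K.minLt ci

theorem propagate (hps : PathStable ci) {G H : MixedGraph V} (gG : Good ci G) (gH : Good ci H)
    {v : ℕ → V} {j : V} {t m : ℕ}
    (inj : ∀ a b, t ≤ a → a ≤ m + 1 → t ≤ b → b ≤ m + 1 → v a = v b → a = b)
    (hj : ∀ u, t ≤ u → u ≤ m + 1 → v u ≠ j)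
    (harr : ∀ u, t ≤ u → u ≤ m → G.arrow (v u) j)
    (hl : ∀ a b, b = a + 1 → t ≤ a → b ≤ m → H.headInto (v a) (v b))
    (hr : ∀ a b, b = a + 1 → t ≤ a → a ≤ m → H.headInto (v b) (v a))
    (hn : ¬ G.adj (v (m+1)) j) :
    ∀ u, t ≤ u → u ≤ m → H.arrow (v u) j := by
  suffices h : ∀ d u, m - u = d → t ≤ u → u ≤ m → H.arrow (v u) j from fun u => h _ u rfl
  intro d
  induction d using Nat.strong_induction_on with
  | _ d ih =>
  intro u hd htu hum
  have ih' : ∀ w, u < w → w ≤ m → H.arrow (v w) j := fun w h1 h2 =>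
    ih _ (by omega) w rfl (by omega) h2
  have hadju : ∀ u, t ≤ u → u ≤ m → skP ci (v u) j := fun u h1 h2 =>
    (gG.sk _ _).1 (Or.inl (harr u h1 h2))
  have inj' : ∀ a b, u ≤ a → a ≤ m + 1 → u ≤ b → b ≤ m + 1 → v a = v b → a = b :=
    fun a b h1 h2 h3 h4 => inj a b (by omega) h2 (by omega) h4
  have hj' : ∀ w, u ≤ w → w ≤ m + 1 → v w ≠ j := fun w h1 h2 => hj w (by omega) h2
  have hs := star hps gH.anc gH.up gH.down gG.up (s := u) (m := m) (v := v) (j := j) hum inj' hj'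
    (fun a b h1 h2 h3 => (gH.sk _ _).1 (headInto_adj (hr a b h1 (by omega) h3)))
    (fun w h1 h2 => hadju w (by omega) h2)
    (fun h => hn ((gG.sk _ _).2 h))
    (fun w h1 h2 => Or.inr (anc_arrow (ih' w h1 h2)))
    (Or.inr (anc_arrow (harr u htu hum)))
  rcases adj_cases (adj_symm gH.anc ((gH.sk _ _).2 (hadju u htu hum))) with h | h
  · have := disc gH.anc gH.max hum inj' hj'
      (fun a b h1 h2 h3 => hl a b h1 (by omega) h3)
      (fun a b h1 h2 h3 => hr a b h1 (by omega) h3)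
      (fun h => hn ((gG.sk _ _).2 ((gH.sk _ _).1 (adj_symm gH.anc h)))) ih' h
    tauto
  · exact h

theorem discIff {K : MixedGraph V} (gK : Good ci K)
    {v : ℕ → V} {j : V} {s m : ℕ} (hsm : s ≤ m)
    (inj : ∀ a b, s ≤ a → a ≤ m + 1 → s ≤ b → b ≤ m + 1 → v a = v b → a = b)
    (hj : ∀ u, s ≤ u → u ≤ m + 1 → v u ≠ j)
    (hadj : K.adj (v (s+1)) (v s)) (hadjj : K.adj j (v s))
    (harr : ∀ u, s < u → u ≤ m → K.arrow (v u) j)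
    (hl : ∀ a b, b = a + 1 → s ≤ a → b ≤ m → K.headInto (v a) (v b))
    (hr : ∀ a b, b = a + 1 → s < a → a ≤ m → K.headInto (v b) (v a))
    (hn : ¬ K.adj (v (m+1)) j) :
    K.collider j (v s) (v (s+1)) ↔ ¬ (K.anc (v s) (v (m+1)) ∨ K.anc (v s) j) := by
  constructor
  · rintro ⟨h1, h2⟩
    have := disc gK.anc gK.max hsm inj hj hl
      (fun a b e1 e2 e3 => by
        rcases Nat.eq_or_lt_of_le e2 with h | h
        · subst h; subst e1; exact h2
        · exact hr a b e1 h e3)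
      (fun h => hn (adj_symm gK.anc h)) harr h1
    tauto
  · intro h
    push Not at h
    refine ⟨?_, ?_⟩
    · rcases adj_cases hadjj with h' | h'
      · exact h'
      · exact (h.2 (anc_arrow h')).elim
    · rcases adj_cases hadj with h' | h'
      · exact h'
      · rcases Nat.eq_or_lt_of_le hsm with e | e
        · subst e; exact (h.1 (anc_arrow h')).elim
        · exact (h.2 (anc_trans (anc_arrow h') (anc_arrow (harr _ (by omega) (by omega))))).elim

theorem status (hps : PathStable ci) {G H : MixedGraph V} (gG : Good ci G) (gH : Good ci H)
    {v : ℕ → V} {j : V} {s m : ℕ} (hsm : s ≤ m)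
    (inj : ∀ a b, s ≤ a → a ≤ m + 1 → s ≤ b → b ≤ m + 1 → v a = v b → a = b)
    (hj : ∀ u, s ≤ u → u ≤ m + 1 → v u ≠ j)
    (hadj : ∀ a b, b = a + 1 → s ≤ a → a ≤ m → G.adj (v b) (v a)) (hadjj : G.adj j (v s))
    (harr : ∀ u, s < u → u ≤ m → G.arrow (v u) j)
    (hcG : ∀ a b c, b = a + 1 → c = b + 1 → s ≤ a → b ≤ m → G.collider (v a) (v b) (v c))
    (hcH : ∀ a b c, b = a + 1 → c = b + 1 → s ≤ a → b ≤ m → H.collider (v a) (v b) (v c))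
    (hn : ¬ G.adj (v (m+1)) j) :
    G.collider j (v s) (v (s+1)) ↔ H.collider j (v s) (v (s+1)) := by
  have harrH : ∀ u, s < u → u ≤ m → H.arrow (v u) j := by
    intro u hu
    exact propagate hps gG gH (t := s+1) (m := m)
      (fun a b h1 h2 h3 h4 => inj a b (by omega) h2 (by omega) h4)
      (fun u h1 h2 => hj u (by omega) h2)
      (fun u h1 h2 => harr u (by omega) h2)
      (fun a b h1 h2 h3 => (hcH a b (b+1) h1 rfl (by omega) h3).1)
      (fun a b h1 h2 h3 => (hcH (a-1) a b (by omega) h1 (by omega) h3).2) hn u hu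
  have e : ∀ a b, H.adj a b ↔ G.adj a b := fun a b => (gH.sk a b).trans (gG.sk a b).symm
  rw [discIff gG hsm inj hj (hadj _ _ rfl le_rfl hsm) hadjj harr
      (fun a b h1 h2 h3 => (hcG a b (b+1) h1 rfl (by omega) h3).1)
      (fun a b h1 h2 h3 => (hcG (a-1) a b (by omega) h1 (by omega) h3).2) hn,
    discIff gH hsm inj hj ((e _ _).2 (hadj _ _ rfl le_rfl hsm)) ((e _ _).2 hadjj) harrH
      (fun a b h1 h2 h3 => (hcH a b (b+1) h1 rfl (by omega) h3).1)
      (fun a b h1 h2 h3 => (hcH (a-1) a b (by omega) h1 (by omega) h3).2)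
      (fun h => hn ((e _ _).1 h))]
  have hsk : ∀ a b, b = a + 1 → s ≤ a → a ≤ m → skP ci (v b) (v a) :=
    fun a b h1 h2 h3 => (gG.sk _ _).1 (hadj a b h1 h2 h3)
  have hskj : ∀ u, s ≤ u → u ≤ m → skP ci (v u) j := by
    intro u h1 h2
    refine (gG.sk _ _).1 ?_
    rcases Nat.eq_or_lt_of_le h1 with h | h
    · subst h; exact adj_symm gG.anc hadjj
    · exact Or.inl (harr u h h2)
  have hn' : ¬ skP ci (v (m+1)) j := fun h => hn ((gG.sk _ _).2 h)
  refine not_congr ⟨fun h => ?_, fun h => ?_⟩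
  · exact star hps gH.anc gH.up gH.down gG.up hsm inj hj hsk hskj hn'
      (fun u h1 h2 => Or.inr (anc_arrow (harrH u h1 h2))) h
  · exact star hps gG.anc gG.up gG.down gH.up hsm inj hj hsk hskj hn'
      (fun u h1 h2 => Or.inr (anc_arrow (harr u h1 h2))) h

open Classical in
noncomputable def W (G : MixedGraph V) (n : ℕ) (v : ℕ → V) : ℕ :=
  ∑ w ∈ (Finset.range (n+1)).image v, rk G w

structure MinConn (G : MixedGraph V) (C : Set V) (n : ℕ) (v : ℕ → V) : Prop where
  conn : Conn G C n v
  min : ∀ n' v', Conn G C n' v' → v' 0 = v 0 → v' n' = v n → W G n v ≤ W G n' v'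

theorem exists_minConn {G : MixedGraph V} {C : Set V} {n : ℕ} {v : ℕ → V} (h : Conn G C n v) :
    ∃ n' v', MinConn G C n' v' ∧ v' 0 = v 0 ∧ v' n' = v n := by
  classical
  have hex : ∃ w n' v', Conn G C n' v' ∧ v' 0 = v 0 ∧ v' n' = v n ∧ W G n' v' = w :=
    ⟨_, n, v, h, rfl, rfl, rfl⟩
  obtain ⟨n', v', h1, h2, h3, h4⟩ := Nat.find_spec hex
  refine ⟨n', v', ⟨h1, ?_⟩, h2, h3⟩
  intro n'' v'' g1 g2 g3
  rw [h4]
  exact Nat.find_min' hex ⟨n'', v'', g1, g2.trans h2, g3.trans h3, rfl⟩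

theorem W_rev (G : MixedGraph V) (n : ℕ) (v : ℕ → V) : W G n (fun u => v (n - u)) = W G n v := by
  classical
  unfold W
  congr 1
  ext x
  simp only [Finset.mem_image, Finset.mem_range]
  constructor
  · rintro ⟨a, ha, rfl⟩; exact ⟨n - a, by omega, rfl⟩
  · rintro ⟨a, ha, rfl⟩; exact ⟨n - a, by omega, by congr 1; omega⟩

theorem MinConn.rev {G : MixedGraph V} (hG : G.IsDirectedAncestral) {C : Set V} {n : ℕ}
    {v : ℕ → V} (h : MinConn G C n v) : MinConn G C n (fun u => v (n - u)) := by
  refine ⟨h.conn.rev hG, ?_⟩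
  intro n' v' h1 h2 h3
  rw [W_rev, ← W_rev G n' v']
  refine h.min _ _ (h1.rev hG) ?_ ?_
  · simpa using h3
  · simpa using h2

theorem MinConn.del {G : MixedGraph V} {C : Set V} {n : ℕ} {v : ℕ → V}
    (h : MinConn G C n v) {l r : ℕ} (hlr : l + 2 ≤ r) (hr : r ≤ n) (hadj : G.adj (v l) (v r))
    (hl : ∀ a, l = a + 1 → OK G C (v a) (v l) (v r))
    (hr' : ∀ c, c = r + 1 → c ≤ n → OK G C (v l) (v r) (v c)) : False := by
  classical
  have h1 := h.conn.del hlr hr hadj hl hr'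
  have h2 := h.min _ _ h1 (by simp) (by
    have : ¬ (n - (r - l - 1) ≤ l) := by omega
    rw [if_neg this]; congr 1; omega)
  refine absurd h2 (not_le.2 ?_)
  unfold W
  refine Finset.sum_lt_sum_of_subset (i := v (l+1)) ?_ ?_ ?_ (Nat.succ_pos _) (fun _ _ _ => Nat.zero_le _)
  · intro x hx
    simp only [Finset.mem_image, Finset.mem_range] at hx ⊢
    obtain ⟨a, ha, rfl⟩ := hx
    split_ifs
    · exact ⟨a, by omega, rfl⟩
    · exact ⟨_, by omega, rfl⟩
  · exact Finset.mem_image_of_mem _ (Finset.mem_range.2 (by omega))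
  · intro hx
    simp only [Finset.mem_image, Finset.mem_range] at hx
    obtain ⟨a, ha, hx⟩ := hx
    split_ifs at hx
    · have := h.conn.inj _ _ (by omega) (by omega) hx
      omega
    · have := h.conn.inj _ _ (by omega) (by omega) hx
      omega

theorem MinConn.ins {G : MixedGraph V} (hG : G.IsDirectedAncestral)
    {C : Set V} {n : ℕ} {v : ℕ → V}
    (h : MinConn G C n v) {l r t : ℕ} {x : V} (hlt : l < t) (htr : t < r) (hr : r ≤ n)
    (htx : G.anc (v t) x)
    (hx : ∀ u, u ≤ n → v u ≠ x)
    (hadj : G.adj (v l) x) (hadj' : G.adj x (v r))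
    (hl : ∀ a, l = a + 1 → OK G C (v a) (v l) x)
    (hm : OK G C (v l) x (v r))
    (hr' : ∀ c, c = r + 1 → c ≤ n → OK G C x (v r) (v c)) : False := by
  classical
  have h1 := h.conn.ins (by omega) hr hx hadj hadj' hl hm hr'
  have h2 := h.min _ _ h1 (by simp) (by
    have : ¬ (n - (r - l - 2) ≤ l) := by omega
    have e2 : ¬ (n - (r - l - 2) = l + 1) := by omega
    rw [if_neg this, if_neg e2]; congr 1; omega)
  refine absurd h2 (not_le.2 ?_)
  unfold W
  set S := (Finset.range (n+1)).image v with hS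
  have hmem : v t ∈ S := Finset.mem_image_of_mem _ (Finset.mem_range.2 (by omega))
  have hsub : (Finset.range (n - (r - l - 2) + 1)).image (fun u => if u ≤ l then v u else
      if u = l + 1 then x else v (u + (r - l - 2))) ⊆ insert x (S.erase (v t)) := by
    intro y hy
    simp only [Finset.mem_image, Finset.mem_range] at hy
    obtain ⟨a, ha, rfl⟩ := hy
    rw [Finset.mem_insert, Finset.mem_erase]
    split_ifs
    · refine Or.inr ⟨fun e => ?_, Finset.mem_image_of_mem _ (Finset.mem_range.2 (by omega))⟩
      have := h.conn.inj _ _ (by omega) (by omega) e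
      omega
    · exact Or.inl rfl
    · refine Or.inr ⟨fun e => ?_, Finset.mem_image_of_mem _ (Finset.mem_range.2 (by omega))⟩
      have := h.conn.inj _ _ (by omega) (by omega) e
      omega
  have h3 := Finset.sum_le_sum_of_subset (f := rk G) hsub
  have hxS : x ∉ S.erase (v t) := by
    intro hxS
    have := Finset.mem_of_mem_erase hxS
    rw [hS, Finset.mem_image] at this
    obtain ⟨a, ha, e⟩ := this
    rw [Finset.mem_range] at ha
    exact hx a (by omega) e
  rw [Finset.sum_insert hxS] at h3
  have h4 := Finset.add_sum_erase S (rk G) hmem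
  have h5 := rk_lt hG htx
  omega

theorem Conn.col {G : MixedGraph V} {C : Set V} {n : ℕ} {v : ℕ → V} (h : Conn G C n v)
    {a b c : ℕ} (h1 : b = a + 1) (h2 : c = b + 1) (h3 : c ≤ n) (hb : v b ∈ C) :
    G.collider (v a) (v b) (v c) := by
  by_contra hc
  exact (h.ok a b c h1 h2 h3).2 hc hb

def RT (G : MixedGraph V) (C : Set V) (n : ℕ) (v : ℕ → V) (j : V) (s m : ℕ) : Prop :=
  s ≤ m ∧ m < n ∧ (∀ u, s < u → u ≤ m → v u ∈ C ∧ G.arrow (v u) j) ∧ ¬ G.adj (v (m+1)) j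

def LT (G : MixedGraph V) (C : Set V) (n : ℕ) (v : ℕ → V) (j : V) (s m : ℕ) : Prop :=
  0 < m ∧ m ≤ s ∧ (∀ u, m ≤ u → u < s → v u ∈ C ∧ G.arrow (v u) j) ∧ ¬ G.adj (v (m-1)) j

theorem extend {G : MixedGraph V} (hG : G.IsDirectedAncestral)
    {C : Set V} {n : ℕ} {v : ℕ → V} (h : MinConn G C n v) {a s : ℕ} (hs : s = a + 1)
    (hh : G.headInto (v s) (v a)) :
    ∀ d m, n - m = d → s < m → m < n → (∀ u, s < u → u ≤ m → v u ∈ C ∧ G.arrow (v u) (v a)) →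
      ∃ m', RT G C n v (v a) s m' := by
  intro d
  induction d using Nat.strong_induction_on with
  | _ d ih =>
  intro m hd hsm hmn hall
  by_cases hadj : G.adj (v (m+1)) (v a)
  swap
  · exact ⟨m, hsm.le, hmn, hall, hadj⟩
  obtain ⟨hmC, hma⟩ := hall m hsm le_rfl
  have hcol := h.conn.col (a := m - 1) (b := m) (c := m + 1) (by omega) rfl (by omega) hmC
  have hda : G.headInto (v (m+1)) (v a) := headInto_of_chain hG hcol.2 hma hadj
  have hA : ∀ z, a = z + 1 → OK G C (v z) (v a) (v (m+1)) := by
    intro z hz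
    have := h.conn.ok z a s hz hs (by omega)
    unfold OK MixedGraph.collider at *
    simpa [hh, hda] using this
  have hfail : ¬ ∀ c, c = m + 1 + 1 → c ≤ n → OK G C (v a) (v (m+1)) (v c) := fun hr' =>
    h.del (l := a) (r := m+1) (by omega) (by omega) (adj_symm hG hadj) hA hr'
  push Not at hfail
  obtain ⟨c, hc, hcn, hok⟩ := hfail
  have hok0 := h.conn.ok m (m+1) c rfl hc hcn
  have hgood : v (m+1) ∈ C ∧ G.arrow (v (m+1)) (v a) := by
    by_cases hcc : G.collider (v a) (v (m+1)) (v c)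
    · exfalso
      have hnot : ¬ (v (m+1) ∈ C ∨ ∃ x ∈ C, G.anc (v (m+1)) x) := by
        intro hx; exact hok ⟨fun _ => hx, fun h => (h hcc).elim⟩
      have h1 : ¬ G.collider (v m) (v (m+1)) (v c) := fun h => hnot (hok0.1 h)
      have h2 : ¬ G.headInto (v m) (v (m+1)) := fun h => h1 ⟨h, hcc.2⟩
      rcases adj_cases (adj_symm hG (headInto_adj hcol.2)) with h3 | h3
      · exact h2 h3
      · exact hnot (Or.inr ⟨_, hmC, anc_arrow h3⟩)
    · have hC : v (m+1) ∈ C := by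
        by_contra hx; exact hok ⟨fun h => (hcc h).elim, fun _ => hx⟩
      have h1 : G.collider (v m) (v (m+1)) (v c) := h.conn.col rfl hc hcn hC
      refine ⟨hC, ?_⟩
      rcases adj_cases (adj_symm hG hadj) with h3 | h3
      · exact (hcc ⟨h3, h1.2⟩).elim
      · exact h3
  refine ih _ (by omega) (m+1) rfl (by omega) (by omega) ?_
  intro u h1 h2
  rcases Nat.eq_or_lt_of_le h2 with e | e
  · subst e; exact hgood
  · exact hall u h1 (by omega)

theorem fail_right {G : MixedGraph V} (hG : G.IsDirectedAncestral)
    {C : Set V} {n : ℕ} {v : ℕ → V} (h : MinConn G C n v) {a s c : ℕ} (hs : s = a + 1)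
    (hc : c = s + 1) (hcn : c ≤ n) (hadj : G.adj (v a) (v c))
    (hf : ¬ ∀ d, d = c + 1 → d ≤ n → OK G C (v a) (v c) (v d)) :
    ∃ m, RT G C n v (v a) s m := by
  push Not at hf
  obtain ⟨d, hd, hdn, hok⟩ := hf
  have hok0 := h.conn.ok s c d hc hd hdn
  have hokb := h.conn.ok a s c hs hc hcn
  have hgood : v c ∈ C ∧ G.arrow (v c) (v a) ∧ G.headInto (v s) (v c) := by
    by_cases hcc : G.collider (v a) (v c) (v d)
    · exfalso
      have hnot : ¬ (v c ∈ C ∨ ∃ x ∈ C, G.anc (v c) x) := by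
        intro hx; exact hok ⟨fun _ => hx, fun h => (h hcc).elim⟩
      have h1 : ¬ G.headInto (v s) (v c) := fun h => hnot (hok0.1 ⟨h, hcc.2⟩)
      have h2 : G.arrow (v c) (v s) := by
        rcases adj_cases (h.conn.adj s c hc hcn) with h3 | h3
        · exact (h1 h3).elim
        · exact h3
      have h3 : ¬ G.headInto (v a) (v s) := by
        intro h3
        rcases hokb.1 ⟨h3, Or.inl h2⟩ with h4 | ⟨x, hx, h4⟩
        · exact hnot (Or.inr ⟨_, h4, anc_arrow h2⟩)
        · exact hnot (Or.inr ⟨_, hx, anc_trans (anc_arrow h2) h4⟩)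
      have h4 : G.arrow (v s) (v a) := by
        rcases adj_cases (h.conn.adj a s hs (by omega)) with h5 | h5
        · exact (h3 h5).elim
        · exact h5
      exact headInto_anc hG (anc_trans (anc_arrow h2) (anc_arrow h4)) hcc.1
    · have hC : v c ∈ C := by
        by_contra hx; exact hok ⟨fun h => (hcc h).elim, fun _ => hx⟩
      have h1 : G.collider (v s) (v c) (v d) := h.conn.col hc hd hdn hC
      refine ⟨hC, ?_, h1.1⟩
      rcases adj_cases hadj with h3 | h3
      · exact (hcc ⟨h3, h1.2⟩).elim
      · exact h3
  refine extend hG h hs (headInto_of_chain hG hgood.2.2 hgood.2.1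
    (adj_symm hG (h.conn.adj a s hs (by omega)))) _ c rfl (by omega) (by omega) ?_
  intro u h1 h2
  obtain rfl : u = c := by omega
  exact ⟨hgood.1, hgood.2.1⟩

theorem shield {G : MixedGraph V} (hG : G.IsDirectedAncestral)
    {C : Set V} {n : ℕ} {v : ℕ → V} (h : MinConn G C n v) {a s c : ℕ} (hs : s = a + 1)
    (hc : c = s + 1) (hcn : c ≤ n) :
    (∃ m, RT G C n v (v a) s m) ∨ (∃ m, LT G C n v (v c) s m) := by
  by_cases hadj : G.adj (v a) (v c)
  swap
  · left
    refine ⟨s, le_rfl, by omega, fun u h1 h2 => by omega, ?_⟩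
    rw [← hc]
    exact fun h => hadj (adj_symm hG h)
  by_cases hf : ∀ d, d = c + 1 → d ≤ n → OK G C (v a) (v c) (v d)
  swap
  · left; exact fail_right hG h hs hc hcn hadj hf
  by_cases hf' : ∀ z, a = z + 1 → OK G C (v z) (v a) (v c)
  · exact (h.del (by omega) hcn hadj hf' hf).elim
  right
  have ea : n - (n - a) = a := by omega
  have ec : n - (n - c) = c := by omega
  obtain ⟨m, h1, h2, h3, h4⟩ := fail_right hG (h.rev hG) (a := n - c) (s := n - s) (c := n - a)
    (by omega) (by omega) (by omega)
    (by simp only [ea, ec]; exact adj_symm hG hadj)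
    (by
      intro hall
      apply hf'
      intro z hz
      have := hall (n - z) (by omega) (by omega)
      have ez : n - (n - z) = z := by omega
      simp only [ea, ec, ez] at this
      exact OK_symm this)
  simp only [ec] at h3 h4
  refine ⟨n - m, by omega, by omega, ?_, ?_⟩
  · intro u g1 g2
    have := h3 (n - u) (by omega) (by omega)
    have eu : n - (n - u) = u := by omega
    simpa only [eu] using this
  · have e : n - m - 1 = n - (m + 1) := by omega
    rw [e]; exact h4

def Same (G H : MixedGraph V) (v : ℕ → V) (s : ℕ) : Prop :=
  ∀ a c, s = a + 1 → c = s + 1 → (G.collider (v a) (v s) (v c) ↔ H.collider (v a) (v s) (v c))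

theorem sameR (hps : PathStable ci) {G H : MixedGraph V} (gG : Good ci G) (gH : Good ci H)
    {C : Set V} {n : ℕ} {v : ℕ → V} (h : Conn G C n v) {a s m : ℕ} (hs : s = a + 1)
    (hR : RT G C n v (v a) s m) (hsame : ∀ u, s < u → u ≤ m → Same G H v u) : Same G H v s := by
  obtain ⟨h1, h2, h3, h4⟩ := hR
  rintro a' c ha' rfl
  obtain rfl : a = a' := by omega
  have hcG : ∀ a b c, b = a + 1 → c = b + 1 → s ≤ a → b ≤ m → G.collider (v a) (v b) (v c) :=
    fun a b c g1 g2 g3 g4 => h.col g1 g2 (by omega) (h3 b (by omega) g4).1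
  refine status hps gG gH h1 ?_ ?_ ?_ ?_ (fun u g1 g2 => (h3 u g1 g2).2) hcG ?_ h4
  · intro x y g1 g2 g3 g4
    exact h.inj x y (by omega) (by omega)
  · intro u g1 g2 e
    have := h.inj _ _ (by omega) (by omega) e
    omega
  · intro x y g1 g2 g3
    exact adj_symm gG.anc (h.adj x y g1 (by omega))
  · exact h.adj a s hs (by omega)
  · intro x y z g1 g2 g3 g4
    exact (hsame y (by omega) g4 x z g1 g2).1 (hcG x y z g1 g2 g3 g4)

theorem sameL (hps : PathStable ci) {G H : MixedGraph V} (gG : Good ci G) (gH : Good ci H)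
    {C : Set V} {n : ℕ} {v : ℕ → V} (h : Conn G C n v) {c s m : ℕ} (hs : c = s + 1) (hcn : c ≤ n)
    (hL : LT G C n v (v c) s m) (hsame : ∀ u, m ≤ u → u < s → Same G H v u) : Same G H v s := by
  obtain ⟨h1, h2, h3, h4⟩ := hL
  have key : Same G H (fun u => v (n - u)) (n - s) := by
    have ec : n - (n - c) = c := by omega
    refine sameR hps gG gH (h.rev gG.anc) (a := n - c) (s := n - s) (m := n - m) (by omega) ?_ ?_
    · simp only [RT, ec]
      refine ⟨by omega, by omega, ?_, ?_⟩
      · intro u g1 g2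
        exact h3 _ (by omega) (by omega)
      · have e : n - (n - m + 1) = m - 1 := by omega
        rw [e]; exact h4
    · intro u g1 g2 x y g3 g4
      have := hsame (n - u) (by omega) (by omega) (n - y) (n - x) (by omega) (by omega)
      rw [collider_symm, this, collider_symm]
  intro a' c' g1 g2
  have := key (n - c') (n - a') (by omega) (by omega)
  have e1 : n - (n - c') = c' := by omega
  have e2 : n - (n - a') = a' := by omega
  have e3 : n - (n - s) = s := by omega
  simp only [e1, e2, e3] at this
  rw [collider_symm, this, collider_symm]

theorem two_cycle {G : MixedGraph V} (gG : Good ci G)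
    {C : Set V} {n : ℕ} {v : ℕ → V} (h : Conn G C n v) {a s m t c m' : ℕ} (hs : s = a + 1)
    (hc : c = t + 1) (hcn : c ≤ n)
    (hR : RT G C n v (v a) s m) (hL : LT G C n v (v c) t m') (hst : s < t) (htm : t ≤ m)
    (hms : m' ≤ s) : False := by
  obtain ⟨h1, h2, h3, h4⟩ := hR
  obtain ⟨k1, k2, k3, k4⟩ := hL
  have hn : ¬ G.adj (v a) (v c) := by
    intro hadj
    rcases Nat.eq_or_lt_of_le htm with e | e
    · subst e; rw [← hc] at h4; exact h4 (adj_symm gG.anc hadj)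
    · have g1 := (h3 c (by omega) (by omega)).2
      rcases Nat.eq_or_lt_of_le hms with e' | e'
      · have : m' - 1 = a := by omega
        rw [this] at k4; exact k4 hadj
      · have g2 := (k3 a (by omega) (by omega)).2
        exact headInto_arrow gG.anc g1 (Or.inl g2)
  have hC : ∀ u, s ≤ u → u ≤ t → v u ∈ C := by
    intro u g1 g2
    rcases Nat.eq_or_lt_of_le g1 with e | e
    · subst e; exact (k3 s hms hst).1
    · exact (h3 u e (by omega)).1
  have := disc gG.anc gG.max (v := v) (j := v a) (t := s) (m := t) hst.le
    (fun x y g1 g2 g3 g4 => h.inj x y (by omega) (by omega))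
    (fun u g1 g2 e => by
      have := h.inj _ _ (by omega) (by omega) e
      omega)
    (fun x y g1 g2 g3 => (h.col (c := y + 1) g1 rfl (by omega) (hC y (by omega) (by omega))).1)
    (fun x y g1 g2 g3 => (h.col (a := x - 1) (by omega) g1 (by omega) (hC x (by omega) (by omega))).2)
    (by rw [← hc]; exact hn)
    (fun u g1 g2 => (h3 u g1 (by omega)).2)
    (h.col hs rfl (by omega) (hC s le_rfl hst.le)).1
  rw [← hc] at this
  exact this.1 (anc_arrow (k3 s hms hst).2)

theorem allSame (hps : PathStable ci) {G H : MixedGraph V} (gG : Good ci G) (gH : Good ci H)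
    {C : Set V} {n : ℕ} {v : ℕ → V} (h : MinConn G C n v) :
    ∀ s, 0 < s → s < n → Same G H v s := by
  classical
  by_contra hcon
  push Not at hcon
  set B := (Finset.range n).filter (fun s => 0 < s ∧ ¬ Same G H v s) with hBdef
  have hmem : ∀ s, s ∈ B ↔ s < n ∧ 0 < s ∧ ¬ Same G H v s := by
    intro s; simp [hBdef]
  have hBne : B.Nonempty := by
    obtain ⟨s, h1, h2, h3⟩ := hcon
    exact ⟨s, (hmem s).2 ⟨h2, h1, h3⟩⟩
  have hB : ∀ s ∈ B, (∃ m, RT G C n v (v (s-1)) s m ∧ ∃ t ∈ B, s < t ∧ t ≤ m) ∨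
      (∃ m, LT G C n v (v (s+1)) s m ∧ ∃ t ∈ B, m ≤ t ∧ t < s) := by
    intro s hs
    obtain ⟨h1, h2, h3⟩ := (hmem s).1 hs
    rcases shield gG.anc h (a := s - 1) (s := s) (c := s+1) (by omega) rfl (by omega) with
      ⟨m, hm⟩ | ⟨m, hm⟩
    · left
      refine ⟨m, hm, ?_⟩
      by_contra hno
      push Not at hno
      refine h3 (sameR hps gG gH h.conn (a := s-1) (by omega) hm ?_)
      intro u g1 g2
      by_contra hu
      have := hno u ((hmem u).2 ⟨by have := hm.2.1; omega, by omega, hu⟩) g1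
      omega
    · right
      refine ⟨m, hm, ?_⟩
      by_contra hno
      push Not at hno
      refine h3 (sameL hps gG gH h.conn (c := s+1) rfl (by omega) hm ?_)
      intro u g1 g2
      by_contra hu
      have := hno u ((hmem u).2 ⟨by omega, by have := hm.1; omega, hu⟩) g1
      omega
  set BR := B.filter (fun s => ∃ m, RT G C n v (v (s-1)) s m ∧ ∃ t ∈ B, s < t ∧ t ≤ m) with hBR
  by_cases hne : BR.Nonempty
  · obtain ⟨hsB, m, hR, t', ht'B, hst', ht'm⟩ := Finset.mem_filter.1 (BR.max'_mem hne)
    set s := BR.max' hne with hsdef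
    set T := B.filter (fun t => s < t) with hT
    have hTne : T.Nonempty := ⟨t', Finset.mem_filter.2 ⟨ht'B, hst'⟩⟩
    obtain ⟨htB, hst⟩ := Finset.mem_filter.1 (T.min'_mem hTne)
    have htt' := T.min'_le t' (Finset.mem_filter.2 ⟨ht'B, hst'⟩)
    have hmin : ∀ u ∈ T, T.min' hTne ≤ u := fun u hu => T.min'_le u hu
    set t := T.min' hTne with htdef
    rcases hB t htB with hh | ⟨m', hL, t'', ht''B, g1, g2⟩
    · have := BR.le_max' t (Finset.mem_filter.2 ⟨htB, hh⟩)
      omega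
    · have g3 : t'' ≤ s := by
        by_contra hlt
        have := hmin t'' (Finset.mem_filter.2 ⟨ht''B, by omega⟩)
        omega
      have hs0 := (hmem s).1 hsB
      have ht0 := (hmem t).1 htB
      exact two_cycle gG h.conn (a := s - 1) (c := t + 1) (by omega) rfl (by omega) hR hL hst
        (by omega) (by omega)
  · have hm := B.min'_mem hBne
    rcases hB _ hm with hh | ⟨m, hL, t, htB, g1, g2⟩
    · exact hne ⟨_, Finset.mem_filter.2 ⟨hm, hh⟩⟩
    · have := B.min'_le t htB
      omega

def rch (G : MixedGraph V) (C : Set V) : ℕ → V → Prop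
  | 0, y => y ∈ C
  | n+1, y => ∃ z, G.arrow y z ∧ rch G C n z

theorem exists_rch {G : MixedGraph V} {C : Set V} {y x : V} (hx : x ∈ C) (h : G.anc y x) :
    ∃ n, rch G C n y := by
  unfold MixedGraph.anc at h
  induction h using Relation.TransGen.head_induction_on with
  | single h => exact ⟨1, x, h, hx⟩
  | head h1 h2 ih =>
    obtain ⟨n, hn⟩ := ih
    exact ⟨n+1, _, h1, hn⟩

theorem rch_an {G : MixedGraph V} {C : Set V} : ∀ (n : ℕ) (y : V), rch G C n y →
    y ∈ C ∨ ∃ x ∈ C, G.anc y x := by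
  intro n
  induction n with
  | zero => intro y h; exact Or.inl h
  | succ n ih =>
    rintro y ⟨z, hz, h⟩
    rcases ih z h with h | ⟨x, hx, h⟩
    · exact Or.inr ⟨z, h, anc_arrow hz⟩
    · exact Or.inr ⟨x, hx, anc_trans (anc_arrow hz) h⟩

theorem transport (hps : PathStable ci) {G H : MixedGraph V} (gG : Good ci G) (gH : Good ci H)
    {C : Set V} : ∀ (n : ℕ) (w y : V), G.arrow w y → H.arrow w y → rch G C n y →
      (∀ k, k < n + 1 → ¬ rch G C k w) → y ∈ C ∨ ∃ x ∈ C, H.anc y x := by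
  intro n
  induction n with
  | zero => intro w y _ _ h _; exact Or.inl h
  | succ n ih =>
    rintro w y hG hH ⟨z, hz, hrz⟩ hmin
    have hnadj : ¬ G.adj w z := by
      intro hadj
      exact hmin (n+1) (by omega)
        ⟨z, arrow_of_anc gG.anc hadj (anc_trans (anc_arrow hG) (anc_arrow hz)), hrz⟩
    have hwy : w ≠ y := adj_ne gG.anc (Or.inl hG)
    have hyz : y ≠ z := adj_ne gG.anc (Or.inl hz)
    have hwz : w ≠ z := by
      rintro rfl
      exact headInto_arrow gG.anc hG (Or.inl hz)
    have hyzH : H.arrow y z := by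
      have := propagate hps gG gH (v := fun u => if u = 0 then y else w) (j := z) (t := 0) (m := 0)
        (by
          intro a b h1 h2 h3 h4 e
          have ha : a = 0 ∨ a = 1 := by omega
          have hb : b = 0 ∨ b = 1 := by omega
          rcases ha with rfl | rfl <;> rcases hb with rfl | rfl <;> simp_all)
        (by intro u h1 h2; split_ifs <;> assumption)
        (by intro u h1 h2; obtain rfl : u = 0 := by omega
            simpa using hz)
        (by intro a b h1 h2 h3; omega)
        (by intro a b h1 h2 h3
            obtain rfl : a = 0 := by omega
            subst h1
            have e : H.headInto w y := Or.inl hH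
            simp only [zero_add, if_true, one_ne_zero, if_false]
            exact e)
        (by simpa using hnadj) 0 le_rfl le_rfl
      simpa using this
    rcases ih y z hz hyzH hrz (fun k hk hr => hmin (k+1) (by omega) ⟨y, hG, hr⟩) with h | ⟨x, hx, h⟩
    · exact Or.inr ⟨z, h, anc_arrow hyzH⟩
    · exact Or.inr ⟨x, hx, anc_trans (anc_arrow hyzH) h⟩

def Run (G : MixedGraph V) (v : ℕ → V) (x : V) (u : ℕ) : Prop :=
  G.arrow (v u) x ∧ ∀ a c, u = a + 1 → c = u + 1 → G.collider (v a) (v u) (v c)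

theorem scan {G : MixedGraph V} (hG : G.IsDirectedAncestral)
    {C : Set V} {n : ℕ} {v : ℕ → V} (h : Conn G C n v) {x : V} {t : ℕ} (ht : 0 < t) :
    ∀ d m, n - m = d → t ≤ m → m < n → (∀ u, t ≤ u → u ≤ m → Run G v x u) →
      (∃ m, t ≤ m ∧ m < n ∧ (∀ u, t ≤ u → u ≤ m → Run G v x u) ∧ ¬ G.adj (v (m+1)) x) ∨
      (∃ r, t < r ∧ r ≤ n ∧ G.headInto (v r) x ∧ (∀ c, c = r + 1 → c ≤ n → OK G C x (v r) (v c)) ∧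
        ∀ u, t ≤ u → u < r → Run G v x u) := by
  intro d
  induction d using Nat.strong_induction_on with
  | _ d ih =>
  intro m hd htm hmn hall
  by_cases hadj : G.adj (v (m+1)) x
  swap
  · exact Or.inl ⟨m, htm, hmn, hall, hadj⟩
  obtain ⟨hmx, hcol⟩ := hall m htm le_rfl
  have hcol := hcol (m-1) (m+1) (by omega) rfl
  have hh := headInto_of_chain hG hcol.2 hmx hadj
  by_cases hok : ∀ c, c = m + 1 + 1 → c ≤ n → OK G C x (v (m+1)) (v c)
  · exact Or.inr ⟨m+1, by omega, by omega, hh, hok, fun u h1 h2 => hall u h1 (by omega)⟩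
  push Not at hok
  obtain ⟨c, hc, hcn, hok⟩ := hok
  have hok0 := h.ok m (m+1) c rfl hc hcn
  have hgood : Run G v x (m+1) := by
    by_cases hcc : G.collider x (v (m+1)) (v c)
    · exfalso
      have hnot : ¬ (v (m+1) ∈ C ∨ ∃ x ∈ C, G.anc (v (m+1)) x) := by
        intro hx; exact hok ⟨fun _ => hx, fun h => (h hcc).elim⟩
      rcases adj_cases (adj_symm hG (headInto_adj hcol.2)) with h3 | h3
      · exact hnot (hok0.1 ⟨h3, hcc.2⟩)
      · exact headInto_anc hG (anc_trans (anc_arrow h3) (anc_arrow hmx)) hcc.1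
    · have hC : v (m+1) ∈ C := by
        by_contra hx; exact hok ⟨fun h => (hcc h).elim, fun _ => hx⟩
      have h1 : G.collider (v m) (v (m+1)) (v c) := h.col rfl hc hcn hC
      refine ⟨?_, fun a c' g1 g2 => h.col g1 g2 (by omega) hC⟩
      rcases adj_cases (adj_symm hG hadj) with h3 | h3
      · exact (hcc ⟨h3, h1.2⟩).elim
      · exact h3
  refine ih _ (by omega) (m+1) rfl (by omega) (by omega) ?_
  intro u h1 h2
  rcases Nat.eq_or_lt_of_le h2 with e | e
  · subst e; exact hgood
  · exact hall u h1 (by omega)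

theorem scanN (hps : PathStable ci) {G H : MixedGraph V} (gG : Good ci G) (gH : Good ci H)
    {C : Set V} {n : ℕ} {v : ℕ → V} (h : Conn G C n v)
    (hsame : ∀ s, 0 < s → s < n → Same G H v s) {x : V} {t m : ℕ} (ht : 0 < t)
    (htm : t ≤ m) (hmn : m < n) (hrun : ∀ u, t ≤ u → u ≤ m → Run G v x u)
    (hn : ¬ G.adj (v (m+1)) x) : H.arrow (v t) x := by
  refine propagate hps gG gH (t := t) (m := m) ?_ ?_ (fun u g1 g2 => (hrun u g1 g2).1) ?_ ?_ hn t
    le_rfl htm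
  · intro a b g1 g2 g3 g4
    exact h.inj a b (by omega) (by omega)
  · intro u g1 g2 e
    rcases Nat.eq_or_lt_of_le g2 with e' | e'
    · have := (hrun m htm le_rfl).2 (m-1) (m+1) (by omega) rfl
      have h2 := (hrun m htm le_rfl).1
      rw [← e, e'] at h2
      exact headInto_arrow gG.anc h2 this.2
    · exact adj_ne gG.anc (Or.inl (hrun u g1 (by omega)).1) e
  · intro a b g1 g2 g3
    exact ((hsame b (by omega) (by omega) a (b+1) g1 rfl).1
      ((hrun b (by omega) g3).2 a (b+1) g1 rfl)).1
  · intro a b g1 g2 g3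
    exact ((hsame a (by omega) (by omega) (a-1) b (by omega) g1).1
      ((hrun a (by omega) g3).2 (a-1) b (by omega) g1)).2

theorem colArrow (hps : PathStable ci) {G H : MixedGraph V} (gG : Good ci G) (gH : Good ci H)
    {C : Set V} {n : ℕ} {v : ℕ → V} (h : MinConn G C n v) {t : ℕ} {x : V} (ht : 0 < t) (htn : t < n)
    (hrun : Run G v x t) (hx : x ∈ C ∨ ∃ y ∈ C, G.anc x y) : H.arrow (v t) x := by
  have hG := gG.anc
  have et : n - (n - t) = t := by omega
  have hrun' : Run G (fun u => v (n - u)) x (n - t) := by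
    refine ⟨by simp only [et]; exact hrun.1, ?_⟩
    intro a c g1 g2
    simp only [et]
    exact collider_symm.1 (hrun.2 (n - c) (n - a) (by omega) (by omega))
  rcases scan hG h.conn ht _ t rfl le_rfl htn
    (fun u g1 g2 => by obtain rfl : u = t := by omega
                       exact hrun) with
    ⟨m, h1, h2, h3, h4⟩ | ⟨r, h1, h2, h3, h4, h5⟩
  · exact scanN hps gG gH h.conn (allSame hps gG gH h) ht h1 h2 h3 h4
  rcases scan hG (h.rev hG).conn (t := n - t) (by omega) _ (n - t) rfl le_rfl (by omega)
    (fun u g1 g2 => by obtain rfl : u = n - t := by omega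
                       exact hrun') with
    ⟨m, k1, k2, k3, k4⟩ | ⟨l', k1, k2, k3, k4, k5⟩
  · have := scanN hps gG gH (h.rev hG).conn (allSame hps gG gH (h.rev hG)) (by omega) k1 k2 k3 k4
    simpa only [et] using this
  exfalso
  obtain ⟨l, hl, hln⟩ : ∃ l, n - l' = l ∧ l' = n - l := ⟨n - l', rfl, by omega⟩
  rw [hl] at k3
  have hl0 : l < t := by omega
  have okl : ∀ a, l = a + 1 → OK G C (v a) (v l) x := by
    intro a ha
    have := k4 (n - a) (by omega) (by omega)
    have ea : n - (n - a) = a := by omega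
    rw [hl, ea] at this
    exact OK_symm this
  have hne : ∀ u, l ≤ u → u ≤ r → v u ≠ x := by
    intro u g1 g2
    rcases Nat.eq_or_lt_of_le g1 with e | e
    · subst e; exact adj_ne hG (headInto_adj k3)
    rcases Nat.eq_or_lt_of_le g2 with e' | e'
    · subst e'; exact adj_ne hG (headInto_adj h3)
    by_cases g3 : t ≤ u
    · exact adj_ne hG (Or.inl (h5 u g3 e').1)
    · have := (k5 (n - u) (by omega) (by omega)).1
      have eu : n - (n - u) = u := by omega
      simp only [eu] at this
      exact adj_ne hG (Or.inl this)
  by_cases hon : ∀ u, u ≤ n → v u ≠ x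
  · exact h.ins hG hl0 h1 h2 (anc_arrow hrun.1) hon (headInto_adj k3)
      (adj_symm hG (headInto_adj h3)) okl ⟨fun _ => hx, fun hn => (hn ⟨k3, h3⟩).elim⟩ h4
  push Not at hon
  obtain ⟨u, hun, rfl⟩ := hon
  by_cases hul : u < l
  · refine h.del (l := u) (r := r) (by omega) h2 (adj_symm hG (headInto_adj h3)) ?_ h4
    intro a ha
    refine ⟨fun _ => hx, fun hn hC => ?_⟩
    exact hn ⟨(h.conn.col ha rfl (by omega) hC).1, h3⟩
  · have hur : r < u := by
      by_contra hcon
      exact hne u (by omega) (by omega) rfl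
    refine h.del (l := l) (r := u) (by omega) hun (headInto_adj k3) okl ?_
    intro c hc hcn
    refine ⟨fun _ => hx, fun hn hC => ?_⟩
    exact hn ⟨k3, (h.conn.col (a := u - 1) (by omega) hc hcn hC).2⟩

theorem main (hps : PathStable ci) {G H : MixedGraph V} (gG : Good ci G) (gH : Good ci H)
    {C : Set V} {n : ℕ} {v : ℕ → V} (h0 : Conn G C n v) :
    ∃ n' v', Conn H C n' v' ∧ v' 0 = v 0 ∧ v' n' = v n := by
  classical
  obtain ⟨n', v', h, e1, e2⟩ := exists_minConn h0
  refine ⟨n', v', ⟨h.conn.inj, ?_, ?_⟩, e1, e2⟩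
  · intro a b hb hbn
    exact (gH.sk _ _).2 ((gG.sk _ _).1 (h.conn.adj a b hb hbn))
  · intro a b c hb hc hcn
    have hs := allSame hps gG gH h b (by omega) (by omega) a c hb hc
    have hok := h.conn.ok a b c hb hc hcn
    refine ⟨fun hcol => ?_, fun hn => hok.2 (fun h => hn (hs.1 h))⟩
    have hcolG := hs.2 hcol
    by_cases hbC : v' b ∈ C
    · exact Or.inl hbC
    rcases hok.1 hcolG with hh | ⟨x, hx, hanc⟩
    · exact Or.inl hh
    have hex := exists_rch hx hanc
    have hsp := Nat.find_spec hex
    have hmin : ∀ k, k < Nat.find hex → ¬ rch G C k (v' b) := fun k hk => Nat.find_min hex hk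
    generalize Nat.find hex = k at hsp hmin
    cases k with
    | zero => exact (hbC hsp).elim
    | succ k =>
      obtain ⟨z, hz, hr⟩ := hsp
      have hrun : Run G v' z b := by
        refine ⟨hz, ?_⟩
        intro a' c' g1 g2
        obtain rfl : a' = a := by omega
        obtain rfl : c' = c := by omega
        exact hcolG
      have hH := colArrow hps gG gH h (by omega) (by omega) hrun (rch_an k z hr)
      rcases transport hps gG gH k (v' b) z hz hH hr hmin with g | ⟨y, hy, g⟩
      · exact Or.inr ⟨z, g, anc_arrow hH⟩
      · exact Or.inr ⟨y, hy, anc_trans (anc_arrow hH) g⟩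

theorem uniq (hps : PathStable ci) : UniquenessProp ci := by
  intro G H a1 a2 a3 a4 a5 b1 b2 b3 b4 b5 A B C _ _ _
  have gG : Good ci G := ⟨a1, a2, a3, a4, a5⟩
  have gH : Good ci H := ⟨b1, b2, b3, b4, b5⟩
  rw [conn_iff, conn_iff]
  refine not_congr ⟨?_, ?_⟩
  · rintro ⟨n, v, h, hA, hB⟩
    obtain ⟨n', v', h', e1, e2⟩ := main hps gG gH h
    exact ⟨n', v', h', e1 ▸ hA, e2 ▸ hB⟩
  · rintro ⟨n, v, h, hA, hB⟩
    obtain ⟨n', v', h', e1, e2⟩ := main hps gH gG h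
    exact ⟨n', v', h', e1 ▸ hA, e2 ▸ hB⟩

end ci
end MPath

/-- Proposition 17(a) of Sadeghi–Soo. -/
theorem statement_9 {V : Type} [Fintype V]
    {Ω : Type} [MeasurableSpace Ω] [StandardBorelSpace Ω] [Nonempty Ω]
    (μ : Measure Ω) [IsProbabilityMeasure μ]
    {𝓧 : V → Type} [∀ v, MeasurableSpace (𝓧 v)]
    (X : ∀ v, Ω → 𝓧 v) (hX : ∀ v, Measurable (X v))
    (hps : PathStable (ciP μ X hX)) :
    UniquenessProp (ciP μ X hX) := by
  exact MPath.uniq hps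
end
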